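/- arXiv:2301.09616 — 7 statements merged into one kernel-verified Lean document; each statement's English description precedes it below -/
import Mathlib

section
/- Let H be a real Hilbert space and T : H → H a positive semidefinite compact operator, with λ_j(T), j ≥ 1, its eigenvalues counted with multiplicity and sorted in non-increasing order. Suppose {ψ_k}_{k∈I} is an orthonormal basis for H and the index set I is partitioned as I = I_low ∪ I_res ∪ I_hi with I_low and I_res finite, such that for some ε ∈ (0,1/2): Σ_{k∈I_hi} ‖Tψ_k‖² + Σ_{k∈I_low} ‖(Id − T)ψ_k‖² ≤ ε². Let M_ε(T) = #{j : λ_j(T) > ε} and N_ε(T) = #{j : λ_j(T) ∈ (ε, 1−ε)}. Then N_ε(T) ≤ #(I_res) and |M_ε(T) − #(I_low)| ≤ #(I_res). -/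
open MeasureTheory
open scoped RealInnerProductSpace ENNReal

/-- `lam : ℕ → ℝ` is the non-increasing sequence of positive eigenvalues of the
positive semidefinite compact operator `T`, counted with multiplicity and padded by
zeros: `lam` is antitone and nonnegative, and there is a family `f` of pairwise
orthogonal vectors, of norm one wherever `lam` is nonzero, with `T f_k = lam_k f_k`,
such that every eigenvector of `T` with nonzero eigenvalue `μ` lies in the span of
`{f_k : lam_k = μ}` (this pins down the multiplicity of every nonzero eigenvalue). -/
def IsEigSeqH {H : Type*} [NormedAddCommGroup H] [InnerProductSpace ℝ H]
    (T : H →L[ℝ] H) (lam : ℕ → ℝ) : Prop :=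
  Antitone lam ∧ (∀ k, 0 ≤ lam k) ∧
  ∃ f : ℕ → H,
    (∀ k, lam k ≠ 0 → ‖f k‖ = 1) ∧
    (∀ k l, k ≠ l → ⟪f k, f l⟫ = 0) ∧
    (∀ k, T (f k) = lam k • f k) ∧
    (∀ μ : ℝ, μ ≠ 0 → ∀ g : H, T g = μ • g →
      g ∈ Submodule.span ℝ {h : H | ∃ k, lam k = μ ∧ h = f k})

lemma aux_exists_comb {H : Type*} [NormedAddCommGroup H] [InnerProductSpace ℝ H]
    {α β : Type*} (F : Finset α) (G : Finset β) (g : α → H) (ψ : β → H)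
    (hc : G.card < F.card) :
    ∃ c : α → ℝ, (∃ j ∈ F, c j ≠ 0) ∧ ∀ k ∈ G, ⟪ψ k, ∑ j ∈ F, c j • g j⟫ = 0 := by
  classical
  let L : (F → ℝ) →ₗ[ℝ] (G → ℝ) :=
    LinearMap.pi fun k => ((innerSL ℝ (ψ k)).toLinearMap).comp
      (∑ j : F, (LinearMap.toSpanSingleton ℝ H (g j)).comp (LinearMap.proj j))
  have hk : LinearMap.ker L ≠ ⊥ := L.ker_ne_bot_of_finrank_lt (by simpa using hc)
  obtain ⟨c, hc1, hc2⟩ := Submodule.exists_mem_ne_zero_of_ne_bot hk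
  refine ⟨fun a => if h : a ∈ F then c ⟨a, h⟩ else 0, ?_, ?_⟩
  · obtain ⟨j, hj⟩ := Function.ne_iff.1 hc2
    exact ⟨j, j.2, by simpa using hj⟩
  · intro k hk
    have h := congrFun (LinearMap.mem_ker.1 hc1) ⟨k, hk⟩
    have h2 : ⟪ψ k, ∑ j : F, c j • g j⟫ = 0 := by
      simpa [L, LinearMap.sum_apply] using h
    rw [← h2, ← Finset.sum_coe_sort F]
    congr 1
    apply Finset.sum_congr rfl
    intro j _
    simp

lemma aux_norm_sq {H : Type*} [NormedAddCommGroup H] [InnerProductSpace ℝ H]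
    {α : Type*} (F : Finset α) (f : α → H) (c : α → ℝ)
    (h1 : ∀ j ∈ F, ‖f j‖ = 1) (h2 : ∀ k l, k ≠ l → ⟪f k, f l⟫ = 0) :
    ‖∑ j ∈ F, c j • f j‖ ^ 2 = ∑ j ∈ F, c j ^ 2 := by
  classical
  rw [← real_inner_self_eq_norm_sq, sum_inner]
  apply Finset.sum_congr rfl
  intro j hj
  rw [inner_sum, Finset.sum_eq_single j]
  · rw [real_inner_smul_left, real_inner_smul_right, real_inner_self_eq_norm_sq, h1 j hj]; ring
  · intro k _ hk
    rw [real_inner_smul_left, real_inner_smul_right, h2 j k hk.symm]; ring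
  · intro h; exact absurd hj h

lemma aux_approx {H : Type*} [NormedAddCommGroup H] [InnerProductSpace ℝ H] [CompleteSpace H]
    (T : H →L[ℝ] H)
    {ι : Type*} (ψ : ι → H) (hON : Orthonormal ℝ ψ)
    (hdense : (Submodule.span ℝ (Set.range ψ)).topologicalClosure = ⊤)
    (Ilow Ires Ihi : Set ι) (hlowfin : Ilow.Finite)
    (hd2 : Disjoint Ilow Ihi)
    (hcover : Ilow ∪ Ires ∪ Ihi = Set.univ)
    (ε : ℝ) (hε : 0 < ε)
    (hbound : (∑' k : Ihi, ((‖T (ψ k)‖₊ : ℝ≥0∞) ^ 2))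
        + (∑' k : Ilow, ((‖ψ k - T (ψ k)‖₊ : ℝ≥0∞) ^ 2)) ≤ ENNReal.ofReal (ε ^ 2))
    (v : H) (hv : ∀ k ∈ Ires, ⟪ψ k, v⟫ = 0) :
    ‖T v - ∑ k ∈ hlowfin.toFinset, ⟪ψ k, v⟫ • ψ k‖ ≤ ε * ‖v‖ := by
  classical
  let b : HilbertBasis ι ℝ H := HilbertBasis.mk hON hdense.ge
  have hb : ∀ k, b k = ψ k := fun k => by simp [b]
  have hs : HasSum (fun k => ⟪ψ k, v⟫ • ψ k) v := by
    have := b.hasSum_repr v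
    simpa [b.repr_apply_apply, hb] using this
  have hTs : HasSum (fun k => ⟪ψ k, v⟫ • T (ψ k)) (T v) := by
    have := T.hasSum hs
    simpa using this
  have hp : HasSum (fun k => if k ∈ Ilow then ⟪ψ k, v⟫ • ψ k else 0)
      (∑ k ∈ hlowfin.toFinset, ⟪ψ k, v⟫ • ψ k) := by
    have := hasSum_sum_of_ne_finset_zero (L := SummationFilter.unconditional ι) (s := hlowfin.toFinset)
      (f := fun k => if k ∈ Ilow then ⟪ψ k, v⟫ • ψ k else 0)
      (by intro k hk; simp at hk; simp [hk])
    convert this using 1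
    apply Finset.sum_congr rfl
    intro k hk
    simp at hk; simp [hk]
  have hd := hTs.sub hp
  refine le_of_tendsto (hd.norm) (Filter.Eventually.of_forall fun s => ?_)
  set e : ι → ℝ≥0∞ := fun k => Ihi.indicator (fun k => (‖T (ψ k)‖₊ : ℝ≥0∞) ^ 2) k +
    Ilow.indicator (fun k => (‖ψ k - T (ψ k)‖₊ : ℝ≥0∞) ^ 2) k with he
  let d : ι → ℝ := fun k => if k ∈ Ihi then ‖T (ψ k)‖ else
    if k ∈ Ilow then ‖ψ k - T (ψ k)‖ else 0
  have hed : ∀ k, e k = ENNReal.ofReal (d k ^ 2) := by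
    intro k
    have hn : ∀ x : H, ((‖x‖₊ : ℝ≥0∞) ^ 2) = ENNReal.ofReal (‖x‖ ^ 2) := by
      intro x
      rw [ENNReal.ofReal_pow (norm_nonneg _), ofReal_norm]; rfl
    by_cases h1 : k ∈ Ihi
    · have h2 : k ∉ Ilow := fun h => Set.disjoint_left.1 hd2 h h1
      simp only [he, d, Set.indicator_of_mem h1, Set.indicator_of_notMem h2, if_pos h1, hn,
        add_zero]
    · by_cases h2 : k ∈ Ilow
      · simp only [he, d, Set.indicator_of_notMem h1, Set.indicator_of_mem h2, if_neg h1,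
          if_pos h2, hn, zero_add]
      · simp only [he, d, Set.indicator_of_notMem h1, Set.indicator_of_notMem h2, if_neg h1,
          if_neg h2]
        simp
  have hdb : ∑ k ∈ s, d k ^ 2 ≤ ε ^ 2 := by
    rw [← ENNReal.ofReal_le_ofReal_iff (by positivity),
      ENNReal.ofReal_sum_of_nonneg (fun _ _ => sq_nonneg _)]
    calc ∑ k ∈ s, ENNReal.ofReal (d k ^ 2) = ∑ k ∈ s, e k :=
          Finset.sum_congr rfl fun k _ => (hed k).symm
      _ ≤ ∑' k, e k := ENNReal.sum_le_tsum s
      _ = _ := by rw [he, ENNReal.tsum_add, ← tsum_subtype, ← tsum_subtype]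
      _ ≤ _ := hbound
  have hcb : ∑ k ∈ s, |⟪ψ k, v⟫| ^ 2 ≤ ‖v‖ ^ 2 := by
    simpa using hON.sum_inner_products_le (s := s) v
  have hterm : ∀ k ∈ s, ‖⟪ψ k, v⟫ • T (ψ k) - (if k ∈ Ilow then ⟪ψ k, v⟫ • ψ k else 0)‖
      ≤ |⟪ψ k, v⟫| * d k := by
    intro k _
    by_cases h1 : k ∈ Ihi
    · have h2 : k ∉ Ilow := fun h => Set.disjoint_left.1 hd2 h h1
      simp [d, h1, h2, norm_smul]
    · by_cases h2 : k ∈ Ilow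
      · simp only [d, h1, h2, if_true, if_false]
        rw [← smul_sub, norm_smul, norm_sub_rev]; simp
      · have h3 : k ∈ Ires := by
          have : k ∈ Ilow ∪ Ires ∪ Ihi := by rw [hcover]; trivial
          simpa [h1, h2] using this
        simp [h2, hv k h3]
  refine (norm_sum_le_of_le _ hterm).trans ?_
  refine le_of_abs_le (abs_le_of_sq_le_sq ?_ (by positivity))
  calc (∑ k ∈ s, |⟪ψ k, v⟫| * d k) ^ 2
      ≤ (∑ k ∈ s, |⟪ψ k, v⟫| ^ 2) * ∑ k ∈ s, d k ^ 2 := Finset.sum_mul_sq_le_sq_mul_sq _ _ _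
    _ ≤ ‖v‖ ^ 2 * ε ^ 2 := by
        apply mul_le_mul hcb hdb (Finset.sum_nonneg fun _ _ => sq_nonneg _) (sq_nonneg _)
    _ = _ := by ring

lemma aux_spectral {H : Type*} [NormedAddCommGroup H] [InnerProductSpace ℝ H] [CompleteSpace H]
    (T : H →L[ℝ] H) (hcomp : IsCompactOperator (⇑T))
    (hsa : ∀ x y : H, ⟪T x, y⟫ = ⟪x, T y⟫) (hpos : ∀ x : H, 0 ≤ ⟪T x, x⟫)
    (lam : ℕ → ℝ) (f : ℕ → H) (hTf : ∀ k, T (f k) = lam k • f k)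
    (hspan : ∀ μ : ℝ, μ ≠ 0 → ∀ g : H, T g = μ • g →
      g ∈ Submodule.span ℝ {h : H | ∃ k, lam k = μ ∧ h = f k})
    (ε : ℝ) (hε : 0 < ε) (w : H) (hw : ∀ j, ε < lam j → ⟪f j, w⟫ = 0) :
    ‖T w‖ ≤ ε * ‖w‖ := by
  let U : Submodule ℝ H := Submodule.span ℝ {h : H | ∃ k, ε < lam k ∧ h = f k}
  have hK : ∀ x : H, x ∈ Uᗮ ↔ ∀ j, ε < lam j → ⟪f j, x⟫ = 0 := by
    intro x
    constructor
    · intro hx j hj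
      exact (Submodule.mem_orthogonal _ _).1 hx _ (Submodule.subset_span ⟨j, hj, rfl⟩)
    · intro hx
      rw [Submodule.mem_orthogonal]
      intro u hu
      induction hu using Submodule.span_induction with
      | mem u hu => obtain ⟨k, hk, rfl⟩ := hu; exact hx k hk
      | zero => simp
      | add a b _ _ ha hb => rw [inner_add_left, ha, hb, add_zero]
      | smul a b _ hb => rw [real_inner_smul_left, hb, mul_zero]
  have hinv : ∀ x ∈ Uᗮ, T x ∈ Uᗮ := by
    intro x hx
    rw [hK] at hx ⊢
    intro j hj
    rw [← hsa, hTf, real_inner_smul_left, hx j hj, mul_zero]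
  let S : Uᗮ →L[ℝ] Uᗮ := T.restrict hinv
  have hScomp : IsCompactOperator S := hcomp.restrict' hinv
  have hSsym : (S : Uᗮ →ₗ[ℝ] Uᗮ).IsSymmetric := fun x y => hsa x y
  have hSn : ‖S‖ ≤ ε := by
    have h1 := S.spectralRadius_eq_nnnorm hSsym.isSelfAdjoint
    have h2 : spectralRadius ℝ S ≤ ENNReal.ofReal ε := by
      unfold spectralRadius
      refine iSup₂_le fun μ hμ => ?_
      rw [← norm_toNNReal]
      change ENNReal.ofReal ‖μ‖ ≤ _
      apply ENNReal.ofReal_le_ofReal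
      by_cases h0 : μ = 0
      · simp [h0, hε.le]
      have hev := (hScomp.hasEigenvalue_iff_mem_spectrum h0).2 hμ
      obtain ⟨g, hg⟩ := hev.exists_hasEigenvector
      have hg1 : T (g : H) = μ • (g : H) := congrArg Subtype.val hg.apply_eq_smul
      have hg0 : (g : H) ≠ 0 := fun h => hg.2 (Subtype.ext h)
      have hp := hpos g
      rw [hg1, real_inner_smul_left, real_inner_self_eq_norm_sq] at hp
      have hgp : 0 < ‖(g : H)‖ ^ 2 := by positivity
      have hμ0 : 0 ≤ μ := nonneg_of_mul_nonneg_left hp hgp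
      rw [Real.norm_of_nonneg hμ0]
      by_contra hlt
      push Not at hlt
      have hgU : (g : H) ∈ U := by
        refine Submodule.span_mono ?_ (hspan μ h0 g hg1)
        rintro h ⟨k, hk, rfl⟩
        exact ⟨k, hk ▸ hlt, rfl⟩
      have := (Submodule.mem_orthogonal _ _).1 g.2 g hgU
      exact hg0 (inner_self_eq_zero.1 this)
    rw [h1] at h2
    have h3 : ENNReal.ofReal ‖S‖ ≤ ENNReal.ofReal ε := by
      rw [← norm_toNNReal] at h2; exact h2
    exact (ENNReal.ofReal_le_ofReal_iff hε.le).1 h3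
  have := S.le_of_opNorm_le hSn ⟨w, (hK w).2 hw⟩
  exact this

/-- **Eigenvalue counting via an approximate eigenbasis.**
Let `T` be a positive semidefinite compact operator on a real Hilbert space `H` with
eigenvalue sequence `lam`, and let `{ψ_k}_{k ∈ ι}` be an orthonormal basis of `H`
partitioned as `ι = I_low ∪ I_res ∪ I_hi` with `I_low`, `I_res` finite.  If
`Σ_{k ∈ I_hi} ‖Tψ_k‖² + Σ_{k ∈ I_low} ‖(I-T)ψ_k‖² ≤ ε²` for some `ε ∈ (0,1/2)`, then
`N_ε(T) ≤ #I_res` and `|M_ε(T) − #I_low| ≤ #I_res`, where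
`M_ε(T) = #{j : lam_j > ε}` and `N_ε(T) = #{j : lam_j ∈ (ε,1-ε)}`. -/
theorem stmt5 {H : Type*} [NormedAddCommGroup H] [InnerProductSpace ℝ H] [CompleteSpace H]
    (T : H →L[ℝ] H) (hcomp : IsCompactOperator (⇑T))
    (hsa : ∀ x y : H, ⟪T x, y⟫ = ⟪x, T y⟫) (hpos : ∀ x : H, 0 ≤ ⟪T x, x⟫)
    (lam : ℕ → ℝ) (hlam : IsEigSeqH T lam)
    {ι : Type*} (ψ : ι → H) (hON : Orthonormal ℝ ψ)
    (hdense : (Submodule.span ℝ (Set.range ψ)).topologicalClosure = ⊤)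
    (Ilow Ires Ihi : Set ι) (hlowfin : Ilow.Finite) (hresfin : Ires.Finite)
    (hd1 : Disjoint Ilow Ires) (hd2 : Disjoint Ilow Ihi) (hd3 : Disjoint Ires Ihi)
    (hcover : Ilow ∪ Ires ∪ Ihi = Set.univ)
    (ε : ℝ) (hε : ε ∈ Set.Ioo (0 : ℝ) (1 / 2))
    (hbound : (∑' k : Ihi, ((‖T (ψ k)‖₊ : ℝ≥0∞) ^ 2))
        + (∑' k : Ilow, ((‖ψ k - T (ψ k)‖₊ : ℝ≥0∞) ^ 2)) ≤ ENNReal.ofReal (ε ^ 2)) :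
    {j : ℕ | ε < lam j}.Finite ∧
    {j : ℕ | lam j ∈ Set.Ioo ε (1 - ε)}.ncard ≤ Ires.ncard ∧
    |({j : ℕ | ε < lam j}.ncard : ℝ) - (Ilow.ncard : ℝ)| ≤ (Ires.ncard : ℝ) := by
  classical
  obtain ⟨_, hlam0, f, hf1, hf2, hTf, hspan⟩ := hlam
  obtain ⟨hε0, hε1⟩ := hε
  have happ := aux_approx T ψ hON hdense Ilow Ires Ihi hlowfin hd2 hcover ε hε0 hbound
  have hcomb : ∀ (F : Finset ℕ) (c : ℕ → ℝ) (a : ℝ),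
      T (∑ j ∈ F, c j • f j) - a • (∑ j ∈ F, c j • f j) = ∑ j ∈ F, (c j * (lam j - a)) • f j := by
    intro F c a
    rw [map_sum, Finset.smul_sum, ← Finset.sum_sub_distrib]
    refine Finset.sum_congr rfl fun j _ => ?_
    rw [map_smul, hTf]
    module
  have hlt : ∀ (F : Finset ℕ) (c : ℕ → ℝ) (a b : ℕ → ℝ), (∃ j ∈ F, c j ≠ 0) →
      (∀ j ∈ F, a j ^ 2 < b j ^ 2) → ∑ j ∈ F, (c j * a j) ^ 2 < ∑ j ∈ F, (c j * b j) ^ 2 := by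
    rintro F c a b ⟨j, hj, hcj⟩ hab
    refine Finset.sum_lt_sum (fun i hi => ?_) ⟨j, hj, ?_⟩
    · rw [mul_pow, mul_pow]
      exact mul_le_mul_of_nonneg_left (hab i hi).le (sq_nonneg _)
    · rw [mul_pow, mul_pow]
      exact mul_lt_mul_of_pos_left (hab j hj) (by positivity)
  -- upper bound for finite subsets
  have hup : ∀ F : Finset ℕ, (∀ j ∈ F, ε < lam j) → F.card ≤ Ilow.ncard + Ires.ncard := by
    intro F hF
    by_contra hcon
    push Not at hcon
    have hcard : (hlowfin.toFinset ∪ hresfin.toFinset).card < F.card := by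
      refine lt_of_le_of_lt (Finset.card_union_le _ _) ?_
      rwa [← Set.ncard_eq_toFinset_card _ hlowfin, ← Set.ncard_eq_toFinset_card _ hresfin]
    obtain ⟨c, hc, hv⟩ := aux_exists_comb F _ f ψ hcard
    set v := ∑ j ∈ F, c j • f j with hvdef
    have h1 := happ v (fun k hk => hv k (by simp [hk]))
    rw [Finset.sum_eq_zero (fun k hk => by rw [hv k (Finset.mem_union_left _ hk), zero_smul]),
      sub_zero] at h1
    have hN : ∀ j ∈ F, ‖f j‖ = 1 := fun j hj => hf1 j (by linarith [hF j hj])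
    have h2 := hcomb F c 0
    rw [zero_smul, sub_zero, ← hvdef] at h2
    have h3 : ‖T v‖ ^ 2 ≤ ε ^ 2 * ‖v‖ ^ 2 := by
      rw [← mul_pow]; exact pow_le_pow_left₀ (norm_nonneg _) h1 2
    rw [h2, aux_norm_sq F f _ hN hf2, hvdef, aux_norm_sq F f _ hN hf2, Finset.mul_sum] at h3
    have h4 := hlt F c (fun _ => ε) (fun j => lam j - 0) hc
      (fun j hj => by have := hF j hj; simp only [sub_zero]; nlinarith)
    have h5 : ∑ j ∈ F, (c j * ε) ^ 2 = ∑ j ∈ F, ε ^ 2 * c j ^ 2 :=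
      Finset.sum_congr rfl fun j _ => by ring
    linarith
  have hfin : {j : ℕ | ε < lam j}.Finite := by
    by_contra hinf
    obtain ⟨F, hF, hFc⟩ := Set.Infinite.exists_subset_card_eq hinf (Ilow.ncard + Ires.ncard + 1)
    have := hup F (fun j hj => hF hj)
    omega
  refine ⟨hfin, ?_, ?_⟩
  · have hfin2 : {j : ℕ | lam j ∈ Set.Ioo ε (1 - ε)}.Finite := hfin.subset fun j hj => hj.1
    by_contra hcon
    push Not at hcon
    rw [Set.ncard_eq_toFinset_card _ hfin2, Set.ncard_eq_toFinset_card _ hresfin] at hcon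
    set F := hfin2.toFinset with hFdef
    have hF : ∀ j ∈ F, ε < lam j ∧ lam j < 1 - ε := fun j hj => by simpa [hFdef] using hj
    obtain ⟨c, hc, hv⟩ := aux_exists_comb F _ f ψ hcon
    set v := ∑ j ∈ F, c j • f j with hvdef
    have h1 := happ v (fun k hk => hv k (by simp [hk]))
    set p := ∑ k ∈ hlowfin.toFinset, ⟪ψ k, v⟫ • ψ k with hp
    have hN : ∀ j ∈ F, ‖f j‖ = 1 := fun j hj => hf1 j (by linarith [(hF j hj).1])
    have h2 := hcomb F c (1 / 2)
    rw [← hvdef] at h2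
    have hvn : ‖v‖ ^ 2 = ∑ j ∈ F, c j ^ 2 := by rw [hvdef, aux_norm_sq F f _ hN hf2]
    have h3 : ‖T v - (1 / 2 : ℝ) • v‖ < (1 / 2 - ε) * ‖v‖ := by
      have h0 : 0 ≤ (1 / 2 - ε) * ‖v‖ := mul_nonneg (by linarith) (norm_nonneg _)
      refine lt_of_pow_lt_pow_left₀ 2 h0 ?_
      rw [h2, aux_norm_sq F f _ hN hf2, mul_pow, hvn, Finset.mul_sum]
      have h4 := hlt F c (fun j => lam j - 1 / 2) (fun _ => 1 / 2 - ε) hc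
        (fun j hj => by
          have := hF j hj
          apply sq_lt_sq' <;> linarith)
      have h5 : ∑ j ∈ F, (c j * (1 / 2 - ε)) ^ 2 = ∑ j ∈ F, (1 / 2 - ε) ^ 2 * c j ^ 2 :=
        Finset.sum_congr rfl fun j _ => by ring
      linarith
    have hpn : ‖p‖ ^ 2 = ∑ k ∈ hlowfin.toFinset, ⟪ψ k, v⟫ ^ 2 := by
      rw [hp, aux_norm_sq _ ψ _ (fun j _ => hON.1 j) (fun k l hkl => hON.2 hkl)]
    have hpv : ⟪p, v⟫ = ∑ k ∈ hlowfin.toFinset, ⟪ψ k, v⟫ ^ 2 := by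
      rw [hp, sum_inner]
      refine Finset.sum_congr rfl fun k _ => ?_
      rw [real_inner_smul_left]; ring
    have hhalf : ‖p - (1 / 2 : ℝ) • v‖ = 1 / 2 * ‖v‖ := by
      rw [← sq_eq_sq₀ (norm_nonneg _) (by positivity), norm_sub_sq_real, real_inner_smul_right,
        norm_smul, hpn, hpv]
      norm_num
      ring
    have htri : ‖p - (1 / 2 : ℝ) • v‖ ≤ ‖T v - (1 / 2 : ℝ) • v‖ + ‖T v - p‖ := by
      have : p - (1 / 2 : ℝ) • v = (T v - (1 / 2 : ℝ) • v) - (T v - p) := by abel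
      rw [this]; exact norm_sub_le _ _
    linarith
  · have hle : {j : ℕ | ε < lam j}.ncard ≤ Ilow.ncard + Ires.ncard := by
      rw [Set.ncard_eq_toFinset_card _ hfin]
      exact hup _ (fun j hj => by simpa using hj)
    have hge : Ilow.ncard ≤ {j : ℕ | ε < lam j}.ncard := by
      by_contra hcon
      push Not at hcon
      rw [Set.ncard_eq_toFinset_card _ hfin, Set.ncard_eq_toFinset_card _ hlowfin] at hcon
      obtain ⟨c, ⟨j, hj, hcj⟩, hv⟩ := aux_exists_comb hlowfin.toFinset hfin.toFinset ψ f hcon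
      set w := ∑ j ∈ hlowfin.toFinset, c j • ψ j with hw
      have hwin : ∀ k, ⟪ψ k, w⟫ = if k ∈ Ilow then c k else 0 := by
        intro k
        rw [hw, inner_sum]
        simp [real_inner_smul_right, orthonormal_iff_ite.1 hON]
      have h1 := happ w (fun k hk => by
        rw [hwin, if_neg (fun h => Set.disjoint_left.1 hd1 h hk)])
      have hpw : ∑ k ∈ hlowfin.toFinset, ⟪ψ k, w⟫ • ψ k = w := by
        conv_rhs => rw [hw]
        refine Finset.sum_congr rfl fun k hk => ?_
        rw [hwin, if_pos (by simpa using hk)]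
      rw [hpw] at h1
      have h2 := aux_spectral T hcomp hsa hpos lam f hTf hspan ε hε0 w
        (fun j hj => hv j (by simpa using hj))
      have hw0 : 0 < ‖w‖ := by
        rw [norm_pos_iff]
        intro h
        have := hwin j
        rw [h, inner_zero_right, if_pos (by simpa using hj)] at this
        exact hcj this.symm
      have htri : ‖w‖ ≤ ‖T w‖ + ‖T w - w‖ := by
        have : w = T w - (T w - w) := by abel
        conv_lhs => rw [this]
        exact norm_sub_le _ _
      nlinarith
    have hle' : ({j : ℕ | ε < lam j}.ncard : ℝ) ≤ Ilow.ncard + Ires.ncard := by exact_mod_cast hle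
    have hge' : (Ilow.ncard : ℝ) ≤ {j : ℕ | ε < lam j}.ncard := by exact_mod_cast hge
    have hr : (0 : ℝ) ≤ Ires.ncard := by positivity
    rw [abs_le]
    constructor <;> linarith
end

section
/- Let K be a compact convex subset of ℝ^d and r > 0. Then μ_d( K \ (K ⊖ B(r)) ) ≤ μ_d( (K ⊕ B(r)) \ K ), where μ_d is d-dimensional Lebesgue measure. -/
open MeasureTheory
open scoped Pointwise

/-- The vector from an interior point `x` to a nearest boundary point `p` is an outer normal. -/
lemma normal_aux {d : ℕ} {K : Set (EuclideanSpace ℝ (Fin d))} (hconv : Convex ℝ K)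
    {x p w : EuclideanSpace ℝ (Fin d)} (hp : p ∈ frontier K)
    (hd : Metric.infDist x Kᶜ = dist x p) (hw : w ∈ K) :
    inner ℝ (p - x) (w - p) ≤ 0 := by
  by_contra! h
  have hball : Metric.ball x (dist x p) ⊆ interior K := by
    rw [← hd]
    exact interior_maximal Metric.ball_infDist_compl_subset Metric.isOpen_ball
  have hv : 0 < ‖w - p‖ ^ 2 := by
    have : w - p ≠ 0 := by
      intro h0
      rw [h0, inner_zero_right] at h
      exact lt_irrefl _ h
    positivity
  set t : ℝ := inner ℝ (p - x) (w - p) / ‖w - p‖ ^ 2 with ht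
  have ht0 : 0 < t := by positivity
  have htv : t * ‖w - p‖ ^ 2 = inner ℝ (p - x) (w - p) := by
    exact div_mul_cancel₀ _ hv.ne'
  have hq : p - t • (w - p) ∈ Metric.ball x (dist x p) := by
    rw [Metric.mem_ball, dist_comm x p, dist_eq_norm, dist_eq_norm]
    have e : p - t • (w - p) - x = (p - x) - t • (w - p) := by abel
    apply lt_of_pow_lt_pow_left₀ 2 (norm_nonneg _)
    rw [e, norm_sub_sq_real, inner_smul_right, norm_smul, mul_pow, Real.norm_eq_abs, sq_abs]
    nlinarith [mul_pos ht0 h]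
  have hpi : p ∈ interior K := by
    apply hconv.openSegment_interior_self_subset_interior (hball hq) hw
    refine ⟨1 / (1 + t), t / (1 + t), by positivity, by positivity, by field_simp, ?_⟩
    have h1 : (1 + t) ≠ 0 := by positivity
    have : (1 / (1 + t)) • (p - t • (w - p)) + (t / (1 + t)) • w
        = (1 / (1 + t) * (1 + t)) • p := by
      rw [div_eq_mul_one_div t (1 + t)]
      module
    rw [this, one_div_mul_cancel h1, one_smul]
  exact hp.2 hpi

lemma volume_image_le_aux {d : ℕ} {g : EuclideanSpace ℝ (Fin d) → EuclideanSpace ℝ (Fin d)}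
    {s : Set (EuclideanSpace ℝ (Fin d))} (hg : LipschitzOnWith 1 g s) :
    volume (g '' s) ≤ volume s := by
  have h := hg.hausdorffMeasure_image_le
    (d := (Module.finrank ℝ (EuclideanSpace ℝ (Fin d)) : ℝ)) (by positivity)
  rw [ENNReal.coe_one, ENNReal.one_rpow, one_mul] at h
  have e := Measure.isAddLeftInvariant_eq_smul (volume : Measure (EuclideanSpace ℝ (Fin d)))
    (Measure.hausdorffMeasure (Module.finrank ℝ (EuclideanSpace ℝ (Fin d)) : ℝ))
  rw [e, Measure.smul_apply, Measure.smul_apply]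
  gcongr

/-- **Inner vs outer neighborhood of a convex body.**
For a compact convex `K ⊆ ℝ^d` and `r > 0`, the volume of the inner collar
`K \ (K ⊖ B(r))` is at most the volume of the outer collar `(K ⊕ B(r)) \ K`,
where `K ⊕ B(r)` is the Minkowski sum and `K ⊖ B(r) = {c : c + B(r) ⊆ K}` is the
Minkowski difference with the closed ball of radius `r`. -/
theorem stmt6 (d : ℕ) (K : Set (EuclideanSpace ℝ (Fin d))) (hK : IsCompact K)
    (hconv : Convex ℝ K) (r : ℝ) (hr : 0 < r) :
    volume (K \ {c : EuclideanSpace ℝ (Fin d) |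
        ∀ y ∈ Metric.closedBall (0 : EuclideanSpace ℝ (Fin d)) r, c + y ∈ K})
      ≤ volume ((K + Metric.closedBall (0 : EuclideanSpace ℝ (Fin d)) r) \ K) := by
  set A := K \ {c : EuclideanSpace ℝ (Fin d) |
        ∀ y ∈ Metric.closedBall (0 : EuclideanSpace ℝ (Fin d)) r, c + y ∈ K} with hA
  set s := A ∩ interior K with hs
  have key : ∀ x ∈ s, ∃ p, p ∈ frontier K ∧ Metric.infDist x Kᶜ = dist x p ∧ dist x p ≤ r := by
    rintro x ⟨⟨hxK, hx⟩, -⟩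
    simp only [Set.mem_ofPred_eq, not_forall] at hx
    obtain ⟨y, hy, hxy⟩ := hx
    obtain ⟨p, hp, hd⟩ := exists_mem_frontier_infDist_compl_eq_dist hxK
      (fun h => hxy (h ▸ Set.mem_univ _))
    refine ⟨p, hp, hd, ?_⟩
    rw [← hd]
    refine (Metric.infDist_le_dist_of_mem (y := x + y) hxy).trans ?_
    simpa [dist_eq_norm] using hy
  choose! P hP1 hP2 hP3 using key
  have hPK : ∀ x ∈ s, P x ∈ K := fun x hx => hK.isClosed.frontier_subset (hP1 x hx)
  set f : EuclideanSpace ℝ (Fin d) → EuclideanSpace ℝ (Fin d) := fun x => P x + (P x - x) with hf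
  have hdist : ∀ x ∈ s, ∀ x' ∈ s, dist x x' ≤ dist (f x) (f x') := by
    intro x hx x' hx'
    have h1 := normal_aux hconv (hP1 x hx) (hP2 x hx) (hPK x' hx')
    have h2 := normal_aux hconv (hP1 x' hx') (hP2 x' hx') (hPK x hx)
    have h3 : 0 ≤ inner ℝ (P x - P x') ((P x - x) - (P x' - x')) := by
      have e : inner ℝ (P x - P x') ((P x - x) - (P x' - x'))
          = - inner ℝ (P x - x) (P x' - P x) - inner ℝ (P x' - x') (P x - P x') := by
        rw [inner_sub_right, real_inner_comm, real_inner_comm (P x' - x'),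
          ← neg_sub (P x') (P x), inner_neg_right]
      linarith
    rw [dist_eq_norm, dist_eq_norm]
    have e1 : x - x' = (P x - P x') - ((P x - x) - (P x' - x')) := by abel
    have e2 : f x - f x' = (P x - P x') + ((P x - x) - (P x' - x')) := by
      simp only [hf]; abel
    refine (sq_le_sq₀ (norm_nonneg _) (norm_nonneg _)).1 ?_
    rw [e2, norm_add_sq_real]
    conv_lhs => rw [e1, norm_sub_sq_real]
    linarith
  have hinj : Set.InjOn f s := by
    intro x hx x' hx' h
    have := hdist x hx x' hx'
    rw [h, dist_self] at this
    exact dist_le_zero.1 this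
  have hfs : f '' s ⊆ (K + Metric.closedBall (0 : EuclideanSpace ℝ (Fin d)) r) \ K := by
    rintro _ ⟨x, hx, rfl⟩
    refine ⟨Set.add_mem_add (hPK x hx) ?_, fun hfK => ?_⟩
    · rw [mem_closedBall_zero_iff, ← dist_eq_norm, dist_comm]
      exact hP3 x hx
    · apply (hP1 x hx).2
      apply hconv.openSegment_interior_self_subset_interior hx.2 hfK
      refine ⟨1 / 2, 1 / 2, by norm_num, by norm_num, by norm_num, ?_⟩
      simp only [hf]
      module
  have hg : LipschitzOnWith 1 (Function.invFunOn f s) (f '' s) := by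
    apply LipschitzOnWith.of_dist_le_mul
    rintro _ ⟨x, hx, rfl⟩ _ ⟨x', hx', rfl⟩
    rw [hinj.leftInvOn_invFunOn hx, hinj.leftInvOn_invFunOn hx', NNReal.coe_one, one_mul]
    exact hdist x hx x' hx'
  have hgs : Function.invFunOn f s '' (f '' s) = s := hinj.leftInvOn_invFunOn.image_image
  calc volume A ≤ volume (s ∪ frontier K) := by
        apply measure_mono
        intro x hx
        by_cases hxi : x ∈ interior K
        · exact Or.inl ⟨hx, hxi⟩
        · exact Or.inr ⟨subset_closure hx.1, hxi⟩
    _ ≤ volume s + volume (frontier K) := measure_union_le _ _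
    _ = volume s := by rw [hconv.addHaar_frontier volume, add_zero]
    _ = volume (Function.invFunOn f s '' (f '' s)) := by rw [hgs]
    _ ≤ volume (f '' s) := volume_image_le_aux hg
    _ ≤ _ := measure_mono hfs
end

section
/- Let A > 0, a > 0, δ_1, …, δ_d ∈ (0,1], and k = (k_1,…,k_d) ∈ ℕ^d. Suppose g_1, …, g_d : ℝ → ℂ satisfy |g_j(ξ)|² ≤ 2A² δ_j Σ_{σ∈{±1}} Ψ_{2a}( δ_j ξ − σ π (k_j + 1/2) ) for all ξ ∈ ℝ and each j. Then for all ξ = (ξ_1,…,ξ_d) ∈ ℝ^d: |∏_{j=1}^d g_j(ξ_j)|² ≤ 2^d A^{2d} (∏_{j=1}^d δ_j) Σ_{σ ∈ {±1}^d} Ψ_{2a}( π · | τ(ξ) − σ ∘ (k + (1/2)𝟙) | ), where τ(ξ) = π^{−1}(δ_1 ξ_1, …, δ_d ξ_d), σ ∘ x = (σ_1 x_1, …, σ_d x_d), 𝟙 = (1,…,1), and |·| is the Euclidean norm on ℝ^d. -/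
open MeasureTheory

/-- The envelope function `Ψ_a(t) = exp(-a * |t|^(2/3))`. -/
noncomputable def Psi (a t : ℝ) : ℝ := Real.exp (-a * |t| ^ ((2 : ℝ) / 3))

theorem rpow_third_sum_le {ι : Type*} (s : Finset ι) (f : ι → ℝ) (hf : ∀ i, 0 ≤ f i) :
    (∑ i ∈ s, f i) ^ ((1 : ℝ) / 3) ≤ ∑ i ∈ s, f i ^ ((1 : ℝ) / 3) := by
  classical
  induction s using Finset.induction_on with
  | empty => simp
  | insert i s hi ih =>
    rw [Finset.sum_insert hi, Finset.sum_insert hi]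
    have h := Real.rpow_add_le_add_rpow (p := (1 : ℝ) / 3) (hf i)
      (Finset.sum_nonneg (fun j (_ : j ∈ s) => hf j)) (by norm_num) (by norm_num)
    linarith

theorem abs_rpow_eq (t : ℝ) : |t| ^ ((2 : ℝ) / 3) = (t ^ 2) ^ ((1 : ℝ) / 3) := by
  rw [← sq_abs t, ← Real.rpow_natCast, ← Real.rpow_mul (abs_nonneg t)]
  norm_num

theorem prod_Psi_le {d : ℕ} (c : ℝ) (hc : 0 ≤ c) (y : Fin d → ℝ) :
    ∏ j, Psi c (Real.pi * y j) ≤ Psi c (Real.pi * Real.sqrt (∑ j, y j ^ 2)) := by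
  unfold Psi
  rw [← Real.exp_sum, ← Finset.mul_sum]
  apply Real.exp_le_exp.mpr
  have h : |Real.pi * Real.sqrt (∑ j, y j ^ 2)| ^ ((2 : ℝ) / 3)
      ≤ ∑ j, |Real.pi * y j| ^ ((2 : ℝ) / 3) := by
    simp only [abs_rpow_eq]
    rw [mul_pow, Real.sq_sqrt (Finset.sum_nonneg fun j _ => sq_nonneg _), Finset.mul_sum]
    simp only [mul_pow]
    exact rpow_third_sum_le _ _ (fun i => by positivity)
  nlinarith [mul_le_mul_of_nonneg_left h hc]

/-- **Fourier decay of tensor-product wave packets.**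
If each `g_j : ℝ → ℂ` satisfies the one-dimensional envelope bound
`|g_j(ξ)|² ≤ 2A²δ_j Σ_{σ=±1} Ψ_{2a}(δ_j ξ − σπ(k_j+1/2))`, then the product
`∏_j g_j(ξ_j)` satisfies the `d`-dimensional bound
`|∏_j g_j(ξ_j)|² ≤ 2^d A^{2d} (∏_j δ_j) Σ_{σ∈{±1}^d} Ψ_{2a}(π |τ(ξ) − σ∘(k+½𝟙)|)`,
where `τ(ξ)_j = π^{-1} δ_j ξ_j`. -/
theorem stmt10 (d : ℕ) (A a : ℝ) (hA : 0 < A) (ha : 0 < a)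
    (δ : Fin d → ℝ) (hδ : ∀ j, δ j ∈ Set.Ioc (0 : ℝ) 1)
    (k : Fin d → ℕ) (g : Fin d → ℝ → ℂ)
    (hg : ∀ j (ξ : ℝ), ‖g j ξ‖ ^ 2 ≤ 2 * A ^ 2 * δ j *
      (Psi (2 * a) (δ j * ξ - Real.pi * ((k j : ℝ) + 1 / 2)) +
        Psi (2 * a) (δ j * ξ + Real.pi * ((k j : ℝ) + 1 / 2)))) :
    ∀ ξ : Fin d → ℝ,
      ‖∏ j, g j (ξ j)‖ ^ 2 ≤ 2 ^ d * A ^ (2 * d) * (∏ j, δ j) *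
        ∑ σ : Fin d → Bool,
          Psi (2 * a) (Real.pi * Real.sqrt (∑ j,
            (δ j * ξ j / Real.pi - (if σ j then 1 else -1) * ((k j : ℝ) + 1 / 2)) ^ 2)) := by
  intro ξ
  have hpi := Real.pi_ne_zero
  rw [norm_prod, ← Finset.prod_pow]
  have h1 : ∏ j, ‖g j (ξ j)‖ ^ 2 ≤ ∏ j, (2 * A ^ 2 * δ j *
      ∑ b : Bool, Psi (2 * a) (Real.pi * (δ j * ξ j / Real.pi -
        (if b then 1 else -1) * ((k j : ℝ) + 1 / 2)))) := by
    refine Finset.prod_le_prod (fun j _ => by positivity) (fun j _ => ?_)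
    refine (hg j (ξ j)).trans (le_of_eq ?_)
    rw [Fintype.sum_bool]
    congr 3
    · simp only [if_true]
      field_simp
    · simp only [Bool.false_eq_true, if_false]
      field_simp
      ring
  refine h1.trans ?_
  rw [Finset.prod_mul_distrib, Finset.prod_mul_distrib, Finset.prod_const, Finset.card_univ,
    Fintype.card_fin, mul_pow, ← pow_mul, Finset.prod_univ_sum, Fintype.piFinset_univ]
  have hd : 0 ≤ ∏ j, δ j := Finset.prod_nonneg fun j _ => (hδ j).1.le
  refine mul_le_mul_of_nonneg_left (Finset.sum_le_sum fun σ _ => ?_) (by positivity)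
  exact prod_Psi_le (2 * a) (by positivity)
    (fun j => δ j * ξ j / Real.pi - (if σ j then 1 else -1) * ((k j : ℝ) + 1 / 2))
end

section
/- Let r ≥ 1, let I, J ⊂ ℝ be intervals, and suppose f : I → ℝ is in the Gevrey class G^r_0(C,R), g : J → ℝ is in G^r_0(D,S), and f(I) ⊂ J. Then the composition g ∘ f : I → ℝ is in G^r_0(D, T) with T = R(1 + CS); that is, |(g∘f)^{(k)}(x)| ≤ D (R(1+CS))^k (k!)^r for all x ∈ I and all integers k ≥ 0. -/
theorem gev_fact_le (n : ℕ) (c : OrderedFinpartition n) :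
    c.length.factorial * ∏ i, (c.partSize i).factorial ≤ n.factorial := by
  induction n with
  | zero =>
    have : c.length = 0 := by have := c.length_le; omega
    have h : IsEmpty (Fin c.length) := by rw [this]; infer_instance
    simp [this]
  | succ n ih =>
    obtain ⟨⟨c, o⟩, rfl⟩ := (OrderedFinpartition.extendEquiv n).surjective c
    have h0 := ih c
    cases o with
    | none =>
      have h1 := c.length_le
      simp only [OrderedFinpartition.extendEquiv_apply, OrderedFinpartition.extend_none]
      show (c.length + 1).factorial * ∏ i : Fin (c.length + 1),
        ((Fin.cons 1 c.partSize : Fin (c.length + 1) → ℕ) i).factorial ≤ _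
      rw [Fin.prod_univ_succ]
      simp only [Fin.cons_zero, Fin.cons_succ, Nat.factorial_succ]
      simp only [Nat.factorial_zero, zero_add, one_mul, mul_assoc]
      exact Nat.mul_le_mul (by omega) h0
    | some k =>
      have h1 := c.partSize_le k
      simp only [OrderedFinpartition.extendEquiv_apply, OrderedFinpartition.extend_some]
      show c.length.factorial * ∏ i : Fin c.length,
        (Function.update c.partSize k (c.partSize k + 1) i).factorial ≤ _
      have : ∏ i : Fin c.length, (Function.update c.partSize k (c.partSize k + 1) i).factorial
          = (c.partSize k + 1) * ∏ i, (c.partSize i).factorial := by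
        rw [← Finset.mul_prod_erase _ _ (Finset.mem_univ k),
          ← Finset.mul_prod_erase _ (fun i => (c.partSize i).factorial) (Finset.mem_univ k)]
        simp only [Function.update_self, Nat.factorial_succ, mul_assoc]
        congr 2
        apply Finset.prod_congr rfl
        intro i hi
        rw [Function.update_of_ne (Finset.ne_of_mem_erase hi)]
      rw [this, mul_left_comm, Nat.factorial_succ]
      exact Nat.mul_le_mul (by omega) h0

theorem gev_iter (a b : ℝ) (n : ℕ) (y : ℝ) :
    iteratedDeriv n (fun t : ℝ => (a - b * t)⁻¹) y = n.factorial * b ^ n * (a - b * y)⁻¹ ^ (n+1) := by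
  have h := iter_deriv_inv_linear n (-b) a
  rw [← iteratedDeriv_eq_iterate] at h
  have h2 : (fun t : ℝ => (a - b * t)⁻¹) = (fun t => (-b * t + a)⁻¹) := by
    funext t; congr 1; ring
  rw [h2, h]
  have : (-b * y + a) = a - b * y := by ring
  simp only [this]
  have h3 : ((-1 : ℝ)) ^ n * (-b) ^ n = b ^ n := by rw [← mul_pow]; simp
  have h4 : (a - b * y) ^ (-1 - n : ℤ) = (a - b * y)⁻¹ ^ (n+1) := by
    rw [inv_pow, ← zpow_natCast, ← zpow_neg]; congr 1; push_cast; ring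
  rw [h4, ← h3]; ring

theorem gev_sum (x : ℝ) (hx : 0 < x) (n : ℕ) :
    ∑ c : OrderedFinpartition n, (c.length.factorial * x ^ c.length *
      ∏ i, ((c.partSize i).factorial : ℝ)) ≤ n.factorial * (1 + x) ^ n := by
  have hF : ContDiffAt ℝ n (fun t : ℝ => (1 - 1 * t)⁻¹) 0 := by
    apply ContDiffAt.inv (by fun_prop) (by simp)
  have hG : ContDiffAt ℝ n (fun t : ℝ => (1 + x - x * t)⁻¹) ((fun t : ℝ => (1 - 1 * t)⁻¹) 0) := by
    apply ContDiffAt.inv (by fun_prop) (by simp)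
  have key := iteratedDeriv_comp_eq_sum_orderedFinpartition (g := fun t : ℝ => (1 + x - x * t)⁻¹)
    (f := fun t : ℝ => (1 - 1 * t)⁻¹) (x := 0) hG hF le_rfl
  simp only [gev_iter] at key
  simp only [mul_zero, sub_zero, inv_one, one_pow, mul_one, add_sub_cancel_right] at key
  rw [← key]
  rcases Nat.eq_zero_or_pos n with rfl | hn
  · simp
  have ev : ((fun t : ℝ => (1 + x - x * t)⁻¹) ∘ (fun t : ℝ => (1 - 1 * t)⁻¹)) =ᶠ[nhds 0]
      fun t => 1 / (1 + x) + x / (1 + x) * (1 - (1 + x) * t)⁻¹ := by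
    have h1 : ∀ᶠ t : ℝ in nhds 0, 1 - (1 + x) * t ≠ 0 :=
      ContinuousAt.eventually_ne (by fun_prop) (by simp)
    have h2 : ∀ᶠ t : ℝ in nhds 0, 1 - t ≠ 0 :=
      ContinuousAt.eventually_ne (by fun_prop) (by simp)
    filter_upwards [h1, h2] with t ht1 ht2
    simp only [Function.comp_apply, one_mul]
    have h3 : 1 + x - x * (1 - t)⁻¹ = (1 - (1 + x) * t) / (1 - t) := by
      field_simp; ring
    rw [h3]
    have : 1 + x ≠ 0 := by positivity
    field_simp; ring
  rw [ev.iteratedDeriv_eq, iteratedDeriv_const_add hn, iteratedDeriv_const_mul_field, gev_iter]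
  simp only [mul_zero, sub_zero, inv_one, one_pow, mul_one]
  apply mul_le_of_le_one_left (by positivity)
  rw [div_le_one (by positivity)]; linarith

theorem stmt16 (r : ℝ) (hr : 1 ≤ r) (I J : Set ℝ) (hI : Convex ℝ I) (hJ : Convex ℝ J)
    (f g : ℝ → ℝ) (C R D S : ℝ) (hC : 0 < C) (hR : 0 < R) (hD : 0 < D) (hS : 0 < S)
    (hf : ContDiffOn ℝ (⊤ : ℕ∞) f I) (hg : ContDiffOn ℝ (⊤ : ℕ∞) g J)
    (hmaps : Set.MapsTo f I J)
    (hfb : ∀ k : ℕ, ∀ x ∈ I,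
      |iteratedDerivWithin k f I x| ≤ C * R ^ k * (Nat.factorial k : ℝ) ^ r)
    (hgb : ∀ k : ℕ, ∀ y ∈ J,
      |iteratedDerivWithin k g J y| ≤ D * S ^ k * (Nat.factorial k : ℝ) ^ r) :
    ∀ k : ℕ, ∀ x ∈ I,
      |iteratedDerivWithin k (g ∘ f) I x|
        ≤ D * (R * (1 + C * S)) ^ k * (Nat.factorial k : ℝ) ^ r := by
  intro k x hx
  rcases Nat.eq_zero_or_pos k with rfl | hk
  · simpa using hgb 0 (f x) (hmaps hx)
  have hpos : 0 ≤ D * (R * (1 + C * S)) ^ k * (Nat.factorial k : ℝ) ^ r := by positivity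
  by_cases hIs : I.Subsingleton
  · have : iteratedDerivWithin k (g ∘ f) I x = 0 := by
      obtain ⟨m, rfl⟩ := Nat.exists_eq_succ_of_ne_zero hk.ne'
      rw [Nat.succ_eq_add_one, iteratedDerivWithin_succ]
      have hIx : I = {x} := hIs.eq_singleton_of_mem hx
      apply derivWithin_zero_of_not_accPt
      rw [hIx, accPt_iff_nhds]
      push Not
      exact ⟨Set.univ, Filter.univ_mem, by simp⟩
    rw [this]; simpa using hpos
  by_cases hJs : J.Subsingleton
  · have : iteratedDerivWithin k (g ∘ f) I x = 0 := by
      have he : Set.EqOn (g ∘ f) (fun _ => g (f x)) I := fun y hy => by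
        simp [hJs (hmaps hy) (hmaps hx)]
      rw [iteratedDerivWithin_congr he hx, iteratedDerivWithin_const, if_neg hk.ne']
    rw [this]; simpa using hpos
  rw [Set.not_subsingleton_iff] at hIs hJs
  have uI := uniqueDiffOn_convex hI (hI.nontrivial_iff_nonempty_interior.1 hIs)
  have uJ := uniqueDiffOn_convex hJ (hJ.nontrivial_iff_nonempty_interior.1 hJs)
  rw [iteratedDerivWithin_comp_eq_sum_orderedFinpartition (hg (f x) (hmaps hx)) (hf x hx) uJ uI hx
    hmaps (by exact_mod_cast le_top)]
  set A : ℝ := (k.factorial : ℝ) ^ (r - 1)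
  have split : ∀ y : ℝ, 0 < y → y ^ r = y ^ (r - 1) * y := fun y hy => by
    rw [← Real.rpow_add_one hy.ne']; simp
  calc _ ≤ ∑ c : OrderedFinpartition k, D * R ^ k * A * (c.length.factorial * (C * S) ^ c.length *
      ∏ i, ((c.partSize i).factorial : ℝ)) := by
        refine (Finset.abs_sum_le_sum_abs _ _).trans (Finset.sum_le_sum fun c _ => ?_)
        rw [abs_mul, Finset.abs_prod]
        have hp : ∏ i, |iteratedDerivWithin (c.partSize i) f I x| ≤
            ∏ i, (C * R ^ (c.partSize i) * ((c.partSize i).factorial : ℝ) ^ r) :=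
          Finset.prod_le_prod (fun _ _ => abs_nonneg _) (fun i _ => hfb _ x hx)
        have hs : ∑ i, c.partSize i = k := by
          have := c.sum_sigma_eq_sum (fun _ => 1)
          simpa using this
        rw [Finset.prod_mul_distrib, Finset.prod_mul_distrib, Finset.prod_pow_eq_pow_sum, hs,
          Real.finsetProd_rpow _ _ (fun _ _ => by positivity)] at hp
        simp only [Finset.prod_const, Finset.card_univ, Fintype.card_fin] at hp
        have hpp : 0 < ∏ i, ((c.partSize i).factorial : ℝ) :=
          Finset.prod_pos fun _ _ => by positivity
        set P := ∏ i, ((c.partSize i).factorial : ℝ) with hP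
        have hm : (0:ℝ) < c.length.factorial := by positivity
        have hle : (c.length.factorial : ℝ) * P ≤ k.factorial := by
          have := gev_fact_le k c
          rw [hP]; exact_mod_cast this
        have hA : ((c.length.factorial : ℝ) * P) ^ r ≤ A * (c.length.factorial * P) := by
          rw [split _ (by positivity)]
          gcongr
          exact Real.rpow_le_rpow (by positivity) hle (by linarith)
        calc _ ≤ (D * S ^ c.length * (c.length.factorial : ℝ) ^ r) * (C ^ c.length * R ^ k * P ^ r) :=
              mul_le_mul (hgb _ _ (hmaps hx)) hp (Finset.prod_nonneg fun _ _ => abs_nonneg _)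
                (by positivity)
          _ = D * R ^ k * (C * S) ^ c.length * ((c.length.factorial : ℝ) * P) ^ r := by
              rw [Real.mul_rpow hm.le hpp.le, mul_pow]; ring
          _ ≤ D * R ^ k * (C * S) ^ c.length * (A * (c.length.factorial * P)) := by gcongr
          _ = _ := by ring
    _ ≤ D * R ^ k * A * (k.factorial * (1 + C * S) ^ k) := by
        rw [← Finset.mul_sum]
        exact mul_le_mul_of_nonneg_left (gev_sum (C * S) (by positivity) k) (by positivity)
    _ = _ := by
        rw [split _ (by positivity), mul_pow]; ring
end

section
/- Let B : ℝ → ℝ be a C^∞ function such that (a) B is supported in [−2,2], and (b) B is in the Gevrey class G^{3/2}_0(C,R) for some C, R > 0, i.e., |B^{(k)}(x)| ≤ C R^k (k!)^{3/2} for all x ∈ ℝ and k ≥ 0. Set A = 12C and a = 1/(2e R^{2/3}). Then the Fourier transform F[B](ξ) = ∫_ℝ B(x) e^{−i x ξ} dx satisfies |F[B](ξ)| ≤ A · exp(−a·|ξ|^{2/3}) for all ξ ∈ ℝ. -/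
open MeasureTheory

theorem gv_supp (B : ℝ → ℝ) (hsupp : Function.support B ⊆ Set.Icc (-2 : ℝ) 2) (k : ℕ) :
    Function.support (iteratedDeriv k B) ⊆ Set.Icc (-2 : ℝ) 2 := by
  induction k with
  | zero => simpa using hsupp
  | succ k ih =>
    rw [iteratedDeriv_succ]
    exact support_deriv_subset.trans (closure_minimal ih isClosed_Icc)

theorem gv_step (B : ℝ → ℝ) (hsmooth : ContDiff ℝ (⊤ : ℕ∞) B)
    (hsupp : Function.support B ⊆ Set.Icc (-2 : ℝ) 2) (ξ : ℝ) (k : ℕ) :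
    ∫ x : ℝ, ((iteratedDeriv (k+1) B x : ℝ) : ℂ) * Complex.exp (-(Complex.I * (x : ℂ) * (ξ : ℂ)))
     = Complex.I * ξ *
      ∫ x : ℝ, ((iteratedDeriv k B x : ℝ) : ℂ) * Complex.exp (-(Complex.I * (x : ℂ) * (ξ : ℂ))) := by
  have hcont : ∀ j, Continuous (iteratedDeriv j B) := fun j =>
    hsmooth.continuous_iteratedDeriv j (by exact_mod_cast le_top)
  have hint : ∀ j, ∀ v : ℝ → ℂ, Continuous v →
      Integrable ((fun x => ((iteratedDeriv j B x : ℝ) : ℂ)) * v) := by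
    intro j v hv
    apply Continuous.integrable_of_hasCompactSupport
    · have := hcont j
      exact (Complex.continuous_ofReal.comp this).mul hv
    · apply HasCompactSupport.intro (isCompact_Icc (a := (-2:ℝ)) (b := 2))
      intro x hx
      have : iteratedDeriv j B x = 0 := by
        by_contra h
        exact hx (gv_supp B hsupp j h)
      simp [this]
  have hu : ∀ x, HasDerivAt (fun x => ((iteratedDeriv k B x : ℝ) : ℂ))
      ((iteratedDeriv (k+1) B x : ℝ) : ℂ) x := by
    intro x
    apply HasDerivAt.ofReal_comp
    rw [iteratedDeriv_succ]
    exact ((hsmooth.differentiable_iteratedDeriv k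
      (by exact_mod_cast WithTop.coe_lt_top k)) x).hasDerivAt
  have hv : ∀ x : ℝ, HasDerivAt (fun x : ℝ => Complex.exp (-(Complex.I * (x : ℂ) * (ξ : ℂ))))
      (Complex.exp (-(Complex.I * (x : ℂ) * (ξ : ℂ))) * (-(Complex.I * ξ))) x := by
    intro x
    have h1 : HasDerivAt (fun x : ℝ => (x : ℂ)) 1 x := by
      simpa using (hasDerivAt_id x).ofReal_comp
    have := ((h1.const_mul Complex.I).mul_const (ξ : ℂ)).neg.cexp
    simpa using this
  have key := integral_mul_deriv_eq_deriv_mul_of_integrable (fun x _ => hu x) (fun x _ => hv x)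
    (hint k _ (by fun_prop)) (hint (k+1) _ (by fun_prop)) (hint k _ (by fun_prop))
  rw [← neg_eq_iff_eq_neg] at key
  rw [← key, ← integral_const_mul, ← integral_neg]
  congr 1
  ext x
  ring

theorem gv_iter (B : ℝ → ℝ) (hsmooth : ContDiff ℝ (⊤ : ℕ∞) B)
    (hsupp : Function.support B ⊆ Set.Icc (-2 : ℝ) 2) (ξ : ℝ) (k : ℕ) :
    ∫ x : ℝ, ((iteratedDeriv k B x : ℝ) : ℂ) * Complex.exp (-(Complex.I * (x : ℂ) * (ξ : ℂ)))
     = (Complex.I * ξ) ^ k *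
      ∫ x : ℝ, (B x : ℂ) * Complex.exp (-(Complex.I * (x : ℂ) * (ξ : ℂ))) := by
  induction k with
  | zero => simp
  | succ k ih => rw [gv_step B hsmooth hsupp, ih]; ring

theorem gv_bound (B : ℝ → ℝ) (hsupp : Function.support B ⊆ Set.Icc (-2 : ℝ) 2) (ξ : ℝ) (k : ℕ)
    (M : ℝ) (hM : ∀ x, |iteratedDeriv k B x| ≤ M) :
    ‖∫ x : ℝ, ((iteratedDeriv k B x : ℝ) : ℂ) * Complex.exp (-(Complex.I * (x : ℂ) * (ξ : ℂ)))‖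
      ≤ M * 4 := by
  rw [← setIntegral_eq_integral_of_forall_compl_eq_zero (s := Set.Icc (-2:ℝ) 2)]
  · refine (norm_setIntegral_le_of_norm_le_const (C := M) (by simp) ?_).trans ?_
    · intro x _
      rw [norm_mul, Complex.norm_exp]
      simpa using hM x
    · simp; norm_num
  · intro x hx
    have : iteratedDeriv k B x = 0 := by
      by_contra h
      exact hx (gv_supp B hsupp k h)
    simp [this]

theorem gv_num (G s : ℝ) (hG0 : 0 ≤ G) (hs : 0 ≤ s)
    (h : ∀ k : ℕ, G * s ^ k ≤ (Nat.factorial k : ℝ) ^ ((3 : ℝ) / 2)) :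
    G ≤ 3 * Real.exp (-(3/4) * s ^ ((2:ℝ)/3)) := by
  set t := s ^ ((2:ℝ)/3) with ht
  set g := G ^ ((2:ℝ)/3) with hg
  have hg0 : 0 ≤ g := by positivity
  have h1 : ∀ k : ℕ, g * ((t/2)^k / (Nat.factorial k : ℝ)) ≤ (1/2)^k := by
    intro k
    have h2 := Real.rpow_le_rpow (by positivity) (h k) (show (0:ℝ) ≤ 2/3 by norm_num)
    rw [← Real.rpow_mul (by positivity), Real.mul_rpow hG0 (by positivity),
      ← Real.rpow_natCast, ← Real.rpow_mul hs, mul_comm (k:ℝ), Real.rpow_mul hs,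
      Real.rpow_natCast] at h2
    norm_num at h2
    have hf : (0:ℝ) < Nat.factorial k := by positivity
    rw [div_pow, one_div, inv_pow, ← mul_div_assoc, div_le_iff₀ hf, ← mul_div_assoc,
      div_eq_inv_mul]
    gcongr
  have h3 : HasSum (fun k : ℕ => (t/2)^k / (Nat.factorial k : ℝ)) (Real.exp (t/2)) := by
    rw [Real.exp_eq_exp_ℝ]
    exact NormedSpace.expSeries_div_hasSum_exp (t/2)
  have h4 : g * Real.exp (t/2) ≤ 2 := hasSum_le h1 (h3.mul_left g) hasSum_geometric_two
  have h5 : G = g ^ ((3:ℝ)/2) := by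
    rw [hg, ← Real.rpow_mul hG0]; norm_num
  have h6 := Real.rpow_le_rpow (by positivity) h4 (show (0:ℝ) ≤ 3/2 by norm_num)
  rw [Real.mul_rpow hg0 (by positivity), ← h5, ← Real.exp_mul] at h6
  have h7 : (2:ℝ) ^ ((3:ℝ)/2) ≤ 3 := by
    have : ((2:ℝ) ^ ((3:ℝ)/2))^2 = 8 := by
      rw [← Real.rpow_natCast, ← Real.rpow_mul (by norm_num)]; norm_num
    nlinarith [Real.rpow_nonneg (show (0:ℝ) ≤ 2 by norm_num) (3/2)]
  have h8 : -(3/4) * t = -(t/2*(3/2)) := by ring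
  rw [h8, Real.exp_neg, ← div_eq_mul_inv, le_div_iff₀ (Real.exp_pos _)]
  exact h6.trans h7


/-- **Near-exponential Fourier decay of compactly supported Gevrey-`3/2` functions.**
If `B : ℝ → ℝ` is `C^∞`, supported in `[-2,2]`, and satisfies the Gevrey bound
`|B^(k)(x)| ≤ C R^k (k!)^{3/2}` for all `x` and `k`, then with `A = 12C` and
`a = 1/(2eR^{2/3})` one has `|F[B](ξ)| ≤ A exp(-a |ξ|^{2/3})` for all `ξ ∈ ℝ`,
where `F[B](ξ) = ∫ B(x) e^{-i x ξ} dx`. -/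
theorem stmt17 (B : ℝ → ℝ) (C R : ℝ) (hC : 0 < C) (hR : 0 < R)
    (hsmooth : ContDiff ℝ (⊤ : ℕ∞) B)
    (hsupp : Function.support B ⊆ Set.Icc (-2 : ℝ) 2)
    (hG : ∀ k : ℕ, ∀ x : ℝ,
      |iteratedDeriv k B x| ≤ C * R ^ k * (Nat.factorial k : ℝ) ^ ((3 : ℝ) / 2)) :
    ∀ ξ : ℝ,
      ‖∫ x : ℝ, (B x : ℂ) * Complex.exp (-(Complex.I * (x : ℂ) * (ξ : ℂ)))‖
        ≤ 12 * C * Real.exp (-(1 / (2 * Real.exp 1 * R ^ ((2 : ℝ) / 3))) * |ξ| ^ ((2 : ℝ) / 3)) := by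

  intro ξ
  set F := ∫ x : ℝ, (B x : ℂ) * Complex.exp (-(Complex.I * (x : ℂ) * (ξ : ℂ))) with hF
  have hb : ∀ k : ℕ, ‖F‖ / (4 * C) * (|ξ| / R) ^ k ≤ (Nat.factorial k : ℝ) ^ ((3 : ℝ) / 2) := by
    intro k
    have h := gv_bound B hsupp ξ k _ (hG k)
    rw [gv_iter B hsmooth hsupp, norm_mul, norm_pow, norm_mul, Complex.norm_I, one_mul,
      Complex.norm_real, Real.norm_eq_abs, ← hF] at h
    rw [div_pow, div_mul_div_comm, div_le_iff₀ (by positivity)]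
    linarith
  have h := gv_num _ _ (by positivity) (by positivity) hb
  rw [div_le_iff₀ (by positivity), Real.div_rpow (abs_nonneg _) hR.le] at h
  have hRp : 0 < R ^ ((2:ℝ)/3) := by positivity
  have hx : 0 ≤ |ξ| ^ ((2:ℝ)/3) := by positivity
  have he : 2 ≤ Real.exp 1 := by linarith [Real.add_one_le_exp (1:ℝ)]
  have hc : 1 / (2 * Real.exp 1) ≤ 3/4 := by
    rw [div_le_iff₀ (by positivity)]; linarith
  have hexp : -(3/4) * (|ξ| ^ ((2:ℝ)/3) / R ^ ((2:ℝ)/3)) ≤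
      -(1 / (2 * Real.exp 1 * R ^ ((2 : ℝ) / 3))) * |ξ| ^ ((2 : ℝ) / 3) := by
    have : -(1 / (2 * Real.exp 1 * R ^ ((2 : ℝ) / 3))) * |ξ| ^ ((2 : ℝ) / 3)
      = -((1 / (2 * Real.exp 1)) * (|ξ| ^ ((2:ℝ)/3) / R ^ ((2:ℝ)/3))) := by
      field_simp
    rw [this, neg_mul]
    gcongr
  have h9 := Real.exp_le_exp.mpr hexp
  nlinarith
end

section
/- Define v : ℝ → ℝ by v(x) = exp(−(1−x²)^{−2}) for x ∈ (−1,1) and v(x) = 0 for |x| ≥ 1. Then v is C^∞ on ℝ, supp(v) ⊂ [−1,1], and v is in the Gevrey class G^{3/2}_0(1, C₁) with C₁ = 2 + 3√2; that is, ‖v^{(k)}‖_∞ ≤ (2 + 3√2)^k (k!)^{3/2} for all integers k ≥ 0. -/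
/-- The bump function `v(x) = exp(-(1-x²)^{-2})` on `(-1,1)`, zero elsewhere. -/
noncomputable def vFun (x : ℝ) : ℝ :=
  if x ∈ Set.Ioo (-1 : ℝ) 1 then Real.exp (-((1 - x ^ 2) ^ 2)⁻¹) else 0

lemma aux_geom (x : ℝ) (hx : |x| < 1) (z : ℂ) (hz : ‖z - x‖ ≤ (1 - |x|) / 2) :
    3 * ((1 - z ^ 2).im) ^ 2 ≤ ((1 - z ^ 2).re) ^ 2 ∧ 1 - z ^ 2 ≠ 0 ∧
      ‖1 - z ^ 2‖ ≤ 3 * (1 - |x|) := by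
  obtain ⟨d, hd⟩ : ∃ d, d = 1 - |x| := ⟨_, rfl⟩
  have hd0 : 0 < d := by linarith
  have hsq : (z.re - x) ^ 2 + z.im ^ 2 ≤ d ^ 2 / 4 := by
    have h1 : ‖z - x‖ ^ 2 = (z.re - x) ^ 2 + z.im ^ 2 := by
      rw [← Complex.normSq_eq_norm_sq, Complex.normSq_apply]; simp; ring
    rw [← h1, hd]
    have := norm_nonneg (z - x)
    nlinarith
  have hξ : |z.re - x| ≤ d / 2 := by
    apply abs_le_of_sq_le_sq _ (by linarith)
    nlinarith [sq_nonneg z.im]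
  have hp : d - |z.re - x| ≤ 1 - |z.re| := by
    have := abs_sub_abs_le_abs_sub z.re x
    linarith
  have hη : 3 * z.im ^ 2 ≤ (1 - |z.re|) ^ 2 := by
    have h1 : (d - |z.re - x|) ^ 2 ≤ (1 - |z.re|) ^ 2 := by
      apply pow_le_pow_left₀ _ hp; linarith
    have h2 := sq_abs (z.re - x)
    nlinarith [sq_nonneg (d / 2 - 2 * |z.re - x|)]
  have hre : (1 - z ^ 2).re = 1 - |z.re| ^ 2 + z.im ^ 2 := by
    rw [sq_abs]; simp [pow_two]; ring
  have him : (1 - z ^ 2).im = - (2 * z.re * z.im) := by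
    simp [pow_two]; ring
  have hq := abs_nonneg z.re
  have hq1 : |z.re| < 1 := by linarith
  have hpos : 0 < (1 - z ^ 2).re := by
    rw [hre]; nlinarith [sq_nonneg z.im]
  refine ⟨?_, ?_, ?_⟩
  · have h3 : 3 * ((1 - z ^ 2).im) ^ 2 = 4 * |z.re| ^ 2 * (3 * z.im ^ 2) := by
      rw [him, sq_abs]; ring
    rw [h3]
    calc 4 * |z.re| ^ 2 * (3 * z.im ^ 2) ≤ 4 * |z.re| ^ 2 * (1 - |z.re|) ^ 2 := by gcongr
      _ = (2 * |z.re| * (1 - |z.re|)) ^ 2 := by ring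
      _ ≤ _ := by
        apply pow_le_pow_left₀
        · have : 0 ≤ 1 - |z.re| := by linarith
          positivity
        · rw [hre]; nlinarith [sq_nonneg z.im, sq_nonneg (1 - |z.re|)]
  · intro h; rw [h] at hpos; simp at hpos
  · have e : 1 - z ^ 2 = (1 - z) * (1 + z) := by ring
    have h1 : ‖1 - z‖ ≤ (1 - x) + d / 2 := by
      have : (1 - z) = ((1 - x : ℝ) : ℂ) - (z - x) := by push_cast; ring
      rw [this]
      refine (norm_sub_le _ _).trans ?_
      rw [Complex.norm_real, Real.norm_of_nonneg (by linarith [le_abs_self x])]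
      linarith
    have h2 : ‖1 + z‖ ≤ (1 + x) + d / 2 := by
      have : (1 + z) = ((1 + x : ℝ) : ℂ) + (z - x) := by push_cast; ring
      rw [this]
      refine (norm_add_le _ _).trans ?_
      rw [Complex.norm_real, Real.norm_of_nonneg (by linarith [neg_abs_le x])]
      linarith
    rw [e, norm_mul, ← hd]
    refine (mul_le_mul h1 h2 (norm_nonneg _) (by linarith [norm_nonneg (1 - z)])).trans ?_
    rcases abs_cases x with ⟨h, _⟩ | ⟨h, _⟩ <;> rw [h] at hd <;> nlinarith

lemma aux_re (w : ℂ) (d : ℝ) (hd : 0 < d) (h : 3 * w.im ^ 2 ≤ w.re ^ 2) (h0 : w ≠ 0)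
    (hn : ‖w‖ ≤ 3 * d) : 1 / (18 * d ^ 2) ≤ ((w ^ 2)⁻¹).re := by
  have hN : 0 < ‖w‖ ^ 2 := by positivity
  have hN2 : ‖w‖ ^ 2 ≤ 9 * d ^ 2 := by nlinarith [norm_nonneg w]
  have e : ‖w‖ ^ 2 = w.re ^ 2 + w.im ^ 2 := by
    rw [← Complex.normSq_eq_norm_sq, Complex.normSq_apply]; ring
  rw [Complex.inv_re, Complex.normSq_eq_norm_sq, norm_pow]
  have e2 : (w ^ 2).re = w.re ^ 2 - w.im ^ 2 := by simp [pow_two]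
  rw [e2, div_le_div_iff₀ (by positivity) (by positivity)]
  have h3 : ‖w‖ ^ 2 ≤ 2 * (w.re ^ 2 - w.im ^ 2) := by rw [e]; linarith
  nlinarith [mul_le_mul h3 hN2 hN.le (by linarith)]

noncomputable def fC (z : ℂ) : ℂ := Complex.exp (-((1 - z ^ 2) ^ 2)⁻¹)

lemma fC_analytic {z : ℂ} (hz : 1 - z ^ 2 ≠ 0) : AnalyticAt ℂ fC z := by
  unfold fC
  have h : AnalyticAt ℂ (fun z : ℂ => (1 - z ^ 2) ^ 2) z := by fun_prop
  exact (h.inv (pow_ne_zero _ hz)).neg.cexp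

lemma aux_cauchy (x : ℝ) (hx : |x| < 1) (k : ℕ) :
    ‖iteratedDeriv k fC x‖ ≤
      k.factorial * Real.exp (-(1 / (18 * (1 - |x|) ^ 2))) / ((1 - |x|) / 2) ^ k := by
  have hd : 0 < 1 - |x| := by linarith
  apply Complex.norm_iteratedDeriv_le_of_forall_mem_sphere_norm_le k (by linarith)
  · apply DifferentiableOn.diffContOnCl
    intro z hz
    have hz' := Metric.closure_ball_subset_closedBall hz
    rw [Metric.mem_closedBall, dist_eq_norm] at hz'
    exact (fC_analytic (aux_geom x hx z hz').2.1).differentiableAt.differentiableWithinAt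
  · intro z hz
    rw [Metric.mem_sphere, dist_eq_norm] at hz
    obtain ⟨h1, h2, h3⟩ := aux_geom x hx z hz.le
    have := aux_re _ _ hd h1 h2 h3
    rw [fC, Complex.norm_exp, Complex.neg_re]
    exact Real.exp_le_exp.2 (by linarith)

lemma aux_exp (d : ℝ) (hd : 0 < d) (m : ℕ) :
    Real.exp (-(1 / (18 * d ^ 2))) / d ^ m ≤ 3 ^ m * √(m.factorial : ℝ) := by
  apply (pow_le_pow_iff_left₀ (by positivity) (by positivity) two_ne_zero).1
  have h := Real.pow_div_factorial_le_exp (1 / (9 * d ^ 2)) (by positivity) m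
  have hm : (0 : ℝ) < m.factorial := by exact_mod_cast m.factorial_pos
  rw [div_le_iff₀ hm] at h
  have e1 : Real.exp (-(1 / (18 * d ^ 2))) ^ 2 = (Real.exp (1 / (9 * d ^ 2)))⁻¹ := by
    rw [← Real.exp_neg, ← Real.exp_nat_mul]
    congr 1
    field_simp
    norm_num
  rw [div_pow, mul_pow, Real.sq_sqrt hm.le, e1, div_le_iff₀ (by positivity),
    inv_le_iff_one_le_mul₀ (Real.exp_pos _)]
  have e2 : (1 / (9 * d ^ 2)) ^ m * ((3 ^ m) ^ 2 * (d ^ m) ^ 2) = 1 := by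
    rw [← mul_pow, ← mul_pow, ← pow_mul, mul_comm m 2, pow_mul, ← mul_pow]
    rw [show 1 / (9 * d ^ 2) * (3 * d) ^ 2 = 1 by field_simp; norm_num, one_pow]
  calc (1 : ℝ) = (1 / (9 * d ^ 2)) ^ m * ((3 ^ m) ^ 2 * (d ^ m) ^ 2) := e2.symm
    _ ≤ (Real.exp (1 / (9 * d ^ 2)) * m.factorial) * ((3 ^ m) ^ 2 * (d ^ m) ^ 2) := by gcongr
    _ = _ := by ring

/-- Candidate for the iterated derivative of `vFun`. -/
noncomputable def FF (k : ℕ) (x : ℝ) : ℝ :=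
  if x ∈ Set.Ioo (-1 : ℝ) 1 then (iteratedDeriv k fC x).re else 0

lemma FF_bound (k m : ℕ) (x : ℝ) (hx : |x| < 1) :
    |FF k x| ≤ (k.factorial * 2 ^ k * (3 ^ (k + m) * √((k + m).factorial : ℝ))) * (1 - |x|) ^ m := by
  have hd : 0 < 1 - |x| := by linarith
  have h := aux_cauchy x hx k
  have h2 := aux_exp _ hd (k + m)
  have hx' : x ∈ Set.Ioo (-1 : ℝ) 1 := abs_lt.1 hx
  rw [FF, if_pos hx']
  refine (Complex.abs_re_le_norm _).trans (h.trans ?_)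
  calc _ = k.factorial * 2 ^ k * (Real.exp (-(1 / (18 * (1 - |x|) ^ 2))) / (1 - |x|) ^ (k + m))
        * (1 - |x|) ^ m := by
        rw [pow_add]; field_simp
        rw [← mul_pow]; congr 1; ring
    _ ≤ _ := by gcongr

lemma FF_bound_all (k m : ℕ) (x : ℝ) :
    |FF k x| ≤ (k.factorial * 2 ^ k * (3 ^ (k + m) * √((k + m).factorial : ℝ))) * (abs (1 - |x|)) ^ m := by
  by_cases hx : |x| < 1
  · rw [abs_of_pos (by linarith : 0 < 1 - |x|)]; exact FF_bound k m x hx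
  · rw [FF, if_neg (fun h : x ∈ Set.Ioo (-1 : ℝ) 1 => hx (abs_lt.2 h)), abs_zero]; positivity

lemma FF_zero : FF 0 = vFun := by
  funext x
  unfold FF vFun
  split_ifs with h
  · rw [iteratedDeriv_zero, fC]
    have : (-((1 - (x : ℂ) ^ 2) ^ 2)⁻¹) = ((-((1 - x ^ 2) ^ 2)⁻¹ : ℝ) : ℂ) := by push_cast; rfl
    rw [this, Complex.exp_ofReal_re]
  · rfl

lemma FF_hasDerivAt (k : ℕ) (x : ℝ) : HasDerivAt (FF k) (FF (k + 1) x) x := by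
  rcases lt_trichotomy |x| 1 with hx | hx | hx
  · have hx' : x ∈ Set.Ioo (-1 : ℝ) 1 := abs_lt.1 hx
    have hne : 1 - (x : ℂ) ^ 2 ≠ 0 := 
      (aux_geom x hx x (by simp; linarith)).2.1
    have han : AnalyticAt ℂ (iteratedDeriv k fC) x := by
      rw [iteratedDeriv_eq_iterate]
      exact AnalyticAt.iterated_deriv (fC_analytic hne) k
    have hd := han.differentiableAt.hasDerivAt
    rw [← iteratedDeriv_succ] at hd
    have hr := hd.real_of_complex
    rw [FF, if_pos hx']
    refine hr.congr_of_eventuallyEq ?_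
    filter_upwards [isOpen_Ioo.mem_nhds hx'] with y hy
    rw [FF, if_pos hy]
  · have h0 : ∀ k, FF k x = 0 := fun k => by
      rw [FF, if_neg (fun h : x ∈ Set.Ioo (-1 : ℝ) 1 => (abs_lt.2 h).ne hx)]
    rw [h0, hasDerivAt_iff_isLittleO, h0]
    simp only [sub_zero, smul_zero]
    have hO : (FF k) =O[nhds x] (fun y => (y - x) ^ 2) := by
      apply Asymptotics.IsBigO.of_bound
        (k.factorial * 2 ^ k * (3 ^ (k + 2) * √((k + 2).factorial : ℝ)))
      filter_upwards with y
      refine (FF_bound_all k 2 y).trans ?_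
      rw [norm_pow, Real.norm_eq_abs]
      have hle : abs (1 - |y|) ≤ |y - x| := by
        rw [← hx, abs_sub_comm y x]
        exact abs_abs_sub_abs_le x y
      have hle2 := pow_le_pow_left₀ (abs_nonneg (1 - |y|)) hle 2
      exact mul_le_mul_of_nonneg_left hle2 (by positivity)
    refine hO.trans_isLittleO ?_
    have h1 := Asymptotics.isLittleO_pow_sub_sub x (by norm_num : 1 < 2)
    refine Asymptotics.IsLittleO.congr_left h1 ?_
    intro y
    rw [Real.norm_eq_abs, sq_abs]
  · have h0 : ∀ k, ∀ y : ℝ, 1 < |y| → FF k y = 0 := fun k y hy => by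
      rw [FF, if_neg (fun h : y ∈ Set.Ioo (-1 : ℝ) 1 => hy.not_gt (abs_lt.2 h))]
    rw [h0 _ _ hx]
    refine (hasDerivAt_const x (0 : ℝ)).congr_of_eventuallyEq ?_
    filter_upwards [(isOpen_lt continuous_const continuous_abs).mem_nhds hx] with y hy
    exact h0 k y hy

lemma FF_iter (k : ℕ) : iteratedDeriv k vFun = FF k := by
  induction k with
  | zero => rw [iteratedDeriv_zero, FF_zero]
  | succ k ih =>
    rw [iteratedDeriv_succ, ih]
    funext x
    exact (FF_hasDerivAt k x).deriv

/-- **The bump function `v` is Gevrey of class `G^{3/2}_0(1, 2+3√2)`.**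
`v` is `C^∞` on `ℝ`, supported in `[-1,1]`, and satisfies
`‖v^(k)‖_∞ ≤ (2+3√2)^k (k!)^{3/2}` for all `k ≥ 0`. -/
theorem stmt18 :
    ContDiff ℝ (⊤ : ℕ∞) vFun ∧
    Function.support vFun ⊆ Set.Icc (-1 : ℝ) 1 ∧
    ∀ k : ℕ, ∀ x : ℝ,
      |iteratedDeriv k vFun x| ≤ (2 + 3 * Real.sqrt 2) ^ k * (Nat.factorial k : ℝ) ^ ((3 : ℝ) / 2) := by
  refine ⟨?_, ?_, ?_⟩
  · apply contDiff_of_differentiable_iteratedDeriv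
    intro m _
    rw [FF_iter]
    exact fun x => (FF_hasDerivAt m x).differentiableAt
  · intro x hx
    by_contra h
    apply hx
    rw [vFun, if_neg (fun h' => h (Set.Ioo_subset_Icc_self h'))]
  · intro k x
    rw [FF_iter]
    have h := FF_bound_all k 0 x
    rw [pow_zero, mul_one, add_zero] at h
    have hk : (0 : ℝ) < k.factorial := by exact_mod_cast k.factorial_pos
    have e : (k.factorial : ℝ) ^ ((3 : ℝ) / 2) = k.factorial * √(k.factorial : ℝ) := by
      rw [Real.sqrt_eq_rpow, show (3 : ℝ) / 2 = 1 + 1 / 2 by norm_num, Real.rpow_add hk,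
        Real.rpow_one]
    have h6 : (6 : ℝ) ≤ 2 + 3 * √2 := by
      have : (4 / 3 : ℝ) ≤ √2 := Real.le_sqrt_of_sq_le (by norm_num)
      linarith
    calc |FF k x| ≤ _ := h
      _ = 6 ^ k * (k.factorial * √(k.factorial : ℝ)) := by
        rw [show (6 : ℝ) = 2 * 3 by norm_num, mul_pow]; ring
      _ ≤ _ := by rw [e]; gcongr
end

section
/- Define v : ℝ → ℝ by v(x) = exp(−(1−x²)^{−2}) for x ∈ (−1,1) and v(x) = 0 for |x| ≥ 1, and define ψ(y) = (π/2)(∫_ℝ v dx)^{−1} v(y), θ(x) = ∫_{−∞}^x ψ(y) dy, and s(x) = sin(θ(x)). Then s is in the Gevrey class G^{3/2}_0(1, C₂) with C₂ = (2 + 3√2)(1 + π/2); that is, ‖s^{(k)}‖_∞ ≤ ((2 + 3√2)(1 + π/2))^k (k!)^{3/2} for all integers k ≥ 0. -/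
open MeasureTheory

/-- The normalized cutoff `ψ = (π/2)(∫v)⁻¹ v`. -/
noncomputable def psiFun (y : ℝ) : ℝ :=
  (Real.pi / 2) * (∫ x : ℝ, vFun x)⁻¹ * vFun y

/-- `θ(x) = ∫_{-∞}^x ψ(y) dy`. -/
noncomputable def thetaFun (x : ℝ) : ℝ := ∫ y in Set.Iic x, psiFun y

/-- The modified Heaviside function `s(x) = sin(θ(x))`. -/
noncomputable def sFun (x : ℝ) : ℝ := Real.sin (thetaFun x)

section GSmooth
open Polynomial Filter Topology

/-- `g(t) = exp(-t^{-2})` for `t > 0`, zero for `t ≤ 0`. -/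
noncomputable def gFun (t : ℝ) : ℝ := if t ≤ 0 then 0 else Real.exp (-(t ^ 2)⁻¹)

theorem gFun_nonpos {t : ℝ} (h : t ≤ 0) : gFun t = 0 := by simp [gFun, h]

theorem gFun_tendsto (p : ℝ[X]) :
    Tendsto (fun x ↦ p.eval x⁻¹ * gFun x) (𝓝 0) (𝓝 0) := by
  simp only [gFun, mul_ite, mul_zero]
  refine tendsto_const_nhds.if ?_
  simp only [not_le]
  have h1 : Tendsto (fun y ↦ p.eval y * Real.exp (-(y ^ 2))) atTop (𝓝 0) := by
    have h0 := p.tendsto_div_exp_atTop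
    refine squeeze_zero_norm' ?_ (tendsto_zero_iff_norm_tendsto_zero.1 h0)
    filter_upwards [eventually_ge_atTop (1 : ℝ)] with y hy
    rw [div_eq_mul_inv, ← Real.exp_neg, norm_mul, norm_mul, Real.norm_of_nonneg (Real.exp_pos _).le,
      Real.norm_of_nonneg (Real.exp_pos _).le]
    gcongr
    nlinarith
  have : Tendsto (fun x : ℝ ↦ p.eval x⁻¹ * Real.exp (-((x⁻¹) ^ 2))) (𝓝[>] 0) (𝓝 0) :=
    h1.comp tendsto_inv_nhdsGT_zero
  refine this.congr' <| mem_of_superset self_mem_nhdsWithin fun x hx ↦ ?_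
  simp

theorem gFun_hasDerivAt (p : ℝ[X]) (x : ℝ) :
    HasDerivAt (fun x ↦ p.eval x⁻¹ * gFun x)
      ((X ^ 2 * (2 * X * p - derivative (R := ℝ) p)).eval x⁻¹ * gFun x) x := by
  rcases lt_trichotomy x 0 with hx | rfl | hx
  · rw [gFun_nonpos hx.le, mul_zero]
    refine (hasDerivAt_const _ 0).congr_of_eventuallyEq ?_
    filter_upwards [gt_mem_nhds hx] with y hy
    rw [gFun_nonpos hy.le, mul_zero]
  · rw [gFun_nonpos le_rfl, mul_zero, hasDerivAt_iff_tendsto_slope]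
    refine ((gFun_tendsto (p * X)).mono_left inf_le_left).congr fun x ↦ ?_
    simp [slope_def_field, div_eq_mul_inv, mul_right_comm, gFun_nonpos le_rfl]
  · have := ((p.hasDerivAt x⁻¹).mul ((hasDerivAt_pow 2 (x⁻¹)).neg).exp).comp x
      (hasDerivAt_inv hx.ne')
    convert! this.congr_of_eventuallyEq _ using 1
    · simp [gFun, hx.not_ge]
      ring
    · filter_upwards [lt_mem_nhds hx] with y hy
      simp [gFun, hy.not_ge]

theorem gFun_contDiff_aux {n : ℕ∞} (p : ℝ[X]) :
    ContDiff ℝ n (fun x ↦ p.eval x⁻¹ * gFun x) := by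
  apply contDiff_all_iff_nat.2 (fun m => ?_) n
  induction m generalizing p with
  | zero => exact contDiff_zero.2 <|
      Differentiable.continuous (𝕜 := ℝ) fun x => (gFun_hasDerivAt p x).differentiableAt
  | succ m ihm =>
    rw [show ((m + 1 : ℕ) : WithTop ℕ∞) = m + 1 from rfl]
    refine contDiff_succ_iff_deriv.2
      ⟨fun x => (gFun_hasDerivAt p x).differentiableAt, by simp, ?_⟩
    convert! ihm (X ^ 2 * (2 * X * p - derivative (R := ℝ) p)) using 2
    exact (gFun_hasDerivAt p _).deriv

theorem gFun_contDiff : ContDiff ℝ (⊤ : ℕ∞) gFun := by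
  simpa using gFun_contDiff_aux (n := ⊤) 1

end GSmooth

theorem vFun_eq (x : ℝ) : vFun x = gFun (1 - x ^ 2) := by
  unfold vFun gFun
  by_cases h : x ∈ Set.Ioo (-1 : ℝ) 1
  · have : ¬ (1 - x ^ 2 ≤ 0) := by
      have := h.1; have := h.2; nlinarith
    rw [if_pos h, if_neg this]
  · have : 1 - x ^ 2 ≤ 0 := by
      by_contra hc
      apply h
      constructor <;> nlinarith
    rw [if_neg h, if_pos this]

theorem vFun_contDiff : ContDiff ℝ (⊤ : ℕ∞) vFun := by
  have : vFun = fun x => gFun (1 - x ^ 2) := funext vFun_eq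
  rw [this]
  exact gFun_contDiff.comp (by fun_prop)

theorem vFun_nonneg (x : ℝ) : 0 ≤ vFun x := by
  unfold vFun; split_ifs <;> positivity

theorem vFun_le_one (x : ℝ) : vFun x ≤ 1 := by
  unfold vFun; split_ifs
  · rw [Real.exp_le_one_iff]; simp only [Left.neg_nonpos_iff]; positivity
  · norm_num

theorem vFun_integrable : Integrable vFun := by
  refine vFun_contDiff.continuous.integrable_of_hasCompactSupport ?_
  refine HasCompactSupport.intro (K := Set.Icc (-1) 1) isCompact_Icc ?_
  intro x hx
  unfold vFun
  rw [if_neg (fun h => hx (Set.Ioo_subset_Icc_self h))]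

theorem exp_aux : (1 / 6 : ℝ) ≤ Real.exp (-(16 / 9)) := by
  rw [Real.exp_neg, one_div]
  apply inv_anti₀ (Real.exp_pos _)
  have h : Real.exp (16 / 9) ^ 9 ≤ 6 ^ 9 := by
    rw [← Real.exp_nat_mul]
    have : ((9 : ℕ) : ℝ) * (16 / 9) = ((16 : ℕ) : ℝ) * 1 := by norm_num
    rw [this, Real.exp_nat_mul]
    calc Real.exp 1 ^ 16 ≤ (2.72 : ℝ) ^ 16 := by
          gcongr
          exact Real.exp_one_lt_d9.le.trans (by norm_num)
      _ ≤ 6 ^ 9 := by norm_num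
  exact le_of_pow_le_pow_left₀ (by norm_num) (by norm_num) h

theorem int_vFun_ge : (1 / 6 : ℝ) ≤ ∫ x, vFun x := by
  have h1 : ∫ x in Set.Icc (-(1/2) : ℝ) (1/2), vFun x ≤ ∫ x, vFun x :=
    setIntegral_le_integral vFun_integrable (Filter.Eventually.of_forall vFun_nonneg)
  have h2 : ∫ x in Set.Icc (-(1/2) : ℝ) (1/2), (1 / 6 : ℝ) ≤
      ∫ x in Set.Icc (-(1/2) : ℝ) (1/2), vFun x := by
    apply setIntegral_mono_on
    · simp
    · exact vFun_integrable.integrableOn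
    · exact measurableSet_Icc
    · intro x hx
      have ha := hx.1
      have hb := hx.2
      unfold vFun
      rw [if_pos ⟨by linarith, by linarith⟩]
      refine exp_aux.trans (Real.exp_le_exp.2 ?_)
      have h3 : (3 / 4 : ℝ) ≤ 1 - x ^ 2 := by nlinarith
      have h4 : (9 / 16 : ℝ) ≤ (1 - x ^ 2) ^ 2 := by nlinarith
      have := inv_anti₀ (by norm_num) h4
      norm_num at this
      linarith
  have h3 : ∫ x in Set.Icc (-(1/2) : ℝ) (1/2), (1 / 6 : ℝ) = 1 / 6 := by
    simp; norm_num
  linarith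

/-- normalization constant -/
noncomputable def mConst : ℝ := (Real.pi / 2) * (∫ x : ℝ, vFun x)⁻¹

theorem mConst_pos : 0 < mConst := by
  have := int_vFun_ge
  unfold mConst
  have := Real.pi_pos
  have : 0 < ∫ x, vFun x := by linarith
  positivity

theorem mConst_le : mConst ≤ 9.6 := by
  have h := int_vFun_ge
  have h1 := inv_anti₀ (by norm_num) h
  norm_num at h1
  have h2 := Real.pi_lt_d2
  unfold mConst
  have h0 : 0 < ∫ x, vFun x := by linarith
  have := inv_pos.2 h0
  nlinarith [Real.pi_pos]

theorem psiFun_eq : psiFun = fun y => mConst * vFun y := rfl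

theorem psiFun_contDiff : ContDiff ℝ (⊤ : ℕ∞) psiFun := by
  rw [psiFun_eq]; exact contDiff_const.mul vFun_contDiff

theorem psiFun_integrable : Integrable psiFun := by
  rw [psiFun_eq]; exact vFun_integrable.const_mul _

theorem thetaFun_hasDerivAt (x : ℝ) : HasDerivAt thetaFun (psiFun x) x := by
  have h : thetaFun = fun x => thetaFun 0 + ∫ y in (0:ℝ)..x, psiFun y := by
    ext x
    have := intervalIntegral.integral_Iic_sub_Iic (a := 0) (b := x)
      psiFun_integrable.integrableOn psiFun_integrable.integrableOn
    unfold thetaFun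
    linarith
  rw [h]
  apply HasDerivAt.const_add
  exact (psiFun_contDiff.continuous).integral_hasStrictDerivAt 0 x |>.hasDerivAt

theorem thetaFun_contDiff : ContDiff ℝ (⊤ : ℕ∞) thetaFun := by
  rw [contDiff_infty_iff_deriv]
  refine ⟨fun x => (thetaFun_hasDerivAt x).differentiableAt, ?_⟩
  rw [show deriv thetaFun = psiFun from funext fun x => (thetaFun_hasDerivAt x).deriv]
  exact psiFun_contDiff

theorem sFun_contDiff : ContDiff ℝ (⊤ : ℕ∞) sFun :=
  Real.contDiff_sin.comp thetaFun_contDiff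

/-- The derivative of the function sFun. -/
noncomputable def fFun (x : ℝ) : ℝ := Real.cos (thetaFun x) * psiFun x

theorem fFun_contDiff : ContDiff ℝ (⊤ : ℕ∞) fFun :=
  (Real.contDiff_cos.comp thetaFun_contDiff).mul psiFun_contDiff

theorem deriv_sFun : deriv sFun = fFun :=
  funext fun x => (thetaFun_hasDerivAt x).sin.deriv

theorem norm_aux (x : ℝ) (z : ℂ) (a : ℝ) (ha : a = 1 - x ^ 2) (ha0 : 0 < a)
    (hz : ‖z - x‖ ≤ a / 2) : ‖(1 - z ^ 2) - (a : ℂ)‖ ≤ 2 * ‖z - x‖ := by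
  have e : (1 - z ^ 2) - (a : ℂ) = -((z - x) * (2 * x + (z - x))) := by
    rw [ha]; push_cast; ring
  rw [e, norm_neg, norm_mul, mul_comm]
  gcongr
  refine (norm_add_le _ _).trans ?_
  rw [norm_mul, Complex.norm_real, Real.norm_eq_abs, Complex.norm_ofNat]
  have : a = 1 - |x| ^ 2 := by rw [ha, sq_abs]
  nlinarith [abs_nonneg x, sq_nonneg (1 - |x|)]

theorem ne_zero_aux (x : ℝ) (z : ℂ) (a : ℝ) (ha : a = 1 - x ^ 2) (ha0 : 0 < a)
    (hz : ‖z - x‖ < a / 2) : 1 - z ^ 2 ≠ 0 := by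
  intro h
  have := norm_aux x z a ha ha0 hz.le
  rw [h, zero_sub, norm_neg, Complex.norm_real, Real.norm_of_nonneg ha0.le] at this
  linarith

theorem re_inv_aux (w : ℂ) (a : ℝ) (ha0 : 0 < a) (hw : ‖w - (a : ℂ)‖ ≤ a / 4) :
    (1 / 2) * (a⁻¹) ^ 2 ≤ ((w ^ 2)⁻¹).re := by
  have h2 : (w.re - a) ^ 2 + w.im ^ 2 ≤ (a / 4) ^ 2 := by
    have : ‖w - (a : ℂ)‖ ^ 2 ≤ (a / 4) ^ 2 := by gcongr
    rw [← Complex.normSq_eq_norm_sq, Complex.normSq_apply] at this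
    simp at this
    nlinarith
  have hre : 3 / 4 * a ≤ w.re := by
    have : |w.re - a| ≤ a / 4 := abs_le_of_sq_le_sq (by nlinarith [sq_nonneg w.im]) (by positivity)
    have := (abs_le.1 this).1
    linarith
  have hre2 : w.re ≤ 5 / 4 * a := by
    have : |w.re - a| ≤ a / 4 := abs_le_of_sq_le_sq (by nlinarith [sq_nonneg w.im]) (by positivity)
    have := (abs_le.1 this).2
    linarith
  have hP : (3 / 4 * a) ^ 2 ≤ w.re ^ 2 := by gcongr
  have hY : w.im ^ 2 ≤ (a / 4) ^ 2 := by nlinarith [sq_nonneg (w.re - a)]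
  have hS : w.re ^ 2 + w.im ^ 2 ≤ 25 / 16 * a ^ 2 := by nlinarith
  rw [Complex.inv_re, Complex.normSq_eq_norm_sq, norm_pow, ← Complex.normSq_eq_norm_sq,
    Complex.normSq_apply]
  have e : (w ^ 2).re = w.re ^ 2 - w.im ^ 2 := by rw [sq, Complex.mul_re]; ring
  rw [e, ← sq, ← sq]
  have hpos : 0 < w.re ^ 2 + w.im ^ 2 := by nlinarith [sq_nonneg w.im]
  rw [le_div_iff₀ (by positivity)]
  have h3 : (w.re ^ 2 + w.im ^ 2) ^ 2 ≤ (25 / 16 * a ^ 2) * (w.re ^ 2 + w.im ^ 2) := by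
    rw [sq]; gcongr
  calc 1 / 2 * a⁻¹ ^ 2 * (w.re ^ 2 + w.im ^ 2) ^ 2
      ≤ 1 / 2 * a⁻¹ ^ 2 * ((25 / 16 * a ^ 2) * (w.re ^ 2 + w.im ^ 2)) := by gcongr
    _ = 25 / 32 * (w.re ^ 2 + w.im ^ 2) := by field_simp; ring
    _ ≤ w.re ^ 2 - w.im ^ 2 := by nlinarith

/-- holomorphic extension of `ψ` -/
noncomputable def psiC (z : ℂ) : ℂ := mConst * Complex.exp (-((1 - z ^ 2) ^ 2)⁻¹)

theorem psiC_ofReal (x : ℝ) (hx : x ∈ Set.Ioo (-1 : ℝ) 1) : psiC x = (psiFun x : ℂ) := by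
  rw [psiFun_eq]; unfold psiC vFun; simp only [if_pos hx]; push_cast; rfl

theorem psiC_norm (x : ℝ) (z : ℂ) (a : ℝ) (ha : a = 1 - x ^ 2) (ha0 : 0 < a)
    (hz : ‖z - x‖ ≤ a / 8) : ‖psiC z‖ ≤ mConst * Real.exp (-((1 / 2) * (a⁻¹) ^ 2)) := by
  unfold psiC
  rw [norm_mul, Complex.norm_real, Real.norm_of_nonneg mConst_pos.le, Complex.norm_exp]
  have := mConst_pos
  gcongr
  rw [Complex.neg_re]
  have := re_inv_aux (1 - z ^ 2) a ha0 ((norm_aux x z a ha ha0 (by linarith)).trans (by linarith))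
  linarith

theorem psiC_diff (x : ℝ) (a : ℝ) (ha : a = 1 - x ^ 2) (ha0 : 0 < a) :
    DifferentiableOn ℂ psiC (Metric.ball (x : ℂ) (a / 2)) := by
  intro z hz
  have h : 1 - z ^ 2 ≠ 0 := ne_zero_aux x z a ha ha0 (by simpa [dist_eq_norm] using hz)
  have h2 : (1 - z ^ 2) ^ 2 ≠ 0 := pow_ne_zero _ h
  unfold psiC
  apply DifferentiableAt.differentiableWithinAt
  fun_prop (disch := assumption)

theorem norm_cos_le (w : ℂ) : ‖Complex.cos w‖ ≤ Real.exp |w.im| := by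
  rw [Complex.cos, norm_div, Complex.norm_ofNat, div_le_iff₀ (by norm_num)]
  refine (norm_add_le _ _).trans ?_
  rw [Complex.norm_exp, Complex.norm_exp]
  have h1 : (w * Complex.I).re ≤ |w.im| := by simpa using neg_le_abs w.im
  have h2 : (-w * Complex.I).re ≤ |w.im| := by simpa using le_abs_self w.im
  have := Real.exp_le_exp.2 h1
  have := Real.exp_le_exp.2 h2
  linarith

/-- Real and complex iterated derivatives agree. -/
theorem iteratedDeriv_real_complex (f : ℝ → ℝ) (hf : ContDiff ℝ (⊤ : ℕ∞) f) (H : ℂ → ℂ)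
    (x r : ℝ) (hH : DifferentiableOn ℂ H (Metric.ball (x : ℂ) r))
    (heq : ∀ y : ℝ, (y : ℂ) ∈ Metric.ball (x : ℂ) r → H y = f y) (n : ℕ) :
    ∀ y : ℝ, (y : ℂ) ∈ Metric.ball (x : ℂ) r →
      iteratedDeriv n H y = ((iteratedDeriv n f y : ℝ) : ℂ) := by
  induction n with
  | zero => simpa using heq
  | succ n ih =>
    intro y hy
    have hA : AnalyticAt ℂ H y := hH.analyticAt (Metric.isOpen_ball.mem_nhds hy)
    have hA2 : AnalyticAt ℂ (iteratedDeriv n H) y := by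
      rw [iteratedDeriv_eq_iterate]; exact hA.iterated_deriv n
    have h1 : HasDerivAt (fun t : ℝ => iteratedDeriv n H t) (iteratedDeriv (n + 1) H y) y := by
      rw [iteratedDeriv_succ]
      exact hA2.differentiableAt.hasDerivAt.comp_ofReal
    have h2 : HasDerivAt (fun t : ℝ => ((iteratedDeriv n f t : ℝ) : ℂ))
        ((iteratedDeriv (n + 1) f y : ℝ) : ℂ) y := by
      apply HasDerivAt.ofReal_comp
      rw [iteratedDeriv_succ]
      exact ((hf.differentiable_iteratedDeriv n (by exact_mod_cast ENat.natCast_lt_top n)) y).hasDerivAt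
    have h3 : (fun t : ℝ => iteratedDeriv n H t) =ᶠ[nhds y]
        (fun t : ℝ => ((iteratedDeriv n f t : ℝ) : ℂ)) := by
      have : ∀ᶠ t : ℝ in nhds y, (t : ℂ) ∈ Metric.ball (x : ℂ) r :=
        Complex.continuous_ofReal.continuousAt.eventually (Metric.isOpen_ball.mem_nhds hy)
      filter_upwards [this] with t ht using ih t ht
    exact (h1.congr_of_eventuallyEq h3.symm).unique h2

theorem mem_Ioo_of_ball (x a y : ℝ) (ha : a = 1 - x ^ 2) (ha0 : 0 < a)
    (hy : (y : ℂ) ∈ Metric.ball (x : ℂ) (a / 2)) : y ∈ Set.Ioo (-1 : ℝ) 1 := by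
  rw [Metric.mem_ball, dist_eq_norm, ← Complex.ofReal_sub, Complex.norm_real, Real.norm_eq_abs,
    abs_lt] at hy
  obtain ⟨h1, h2⟩ := hy
  have hx : -1 < x := by nlinarith
  have hx' : x < 1 := by nlinarith
  constructor <;> nlinarith

theorem exists_ext (x a : ℝ) (ha : a = 1 - x ^ 2) (ha0 : 0 < a) :
    ∃ T : ℂ → ℂ, (∀ z ∈ Metric.ball (x : ℂ) (a / 2), HasDerivAt T (psiC z) z) ∧
      ∀ y : ℝ, (y : ℂ) ∈ Metric.ball (x : ℂ) (a / 2) → T y = thetaFun y := by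
  obtain ⟨T, hT0, hT⟩ := (psiC_diff x a ha ha0).isExactOn_ball.with_val_at (x : ℂ) (thetaFun x : ℂ)
  have hmem : ∀ y : ℝ, y ∈ Metric.ball x (a / 2) ↔ (y : ℂ) ∈ Metric.ball (x : ℂ) (a / 2) := by
    intro y
    rw [Metric.mem_ball, Metric.mem_ball, dist_eq_norm, dist_eq_norm, ← Complex.ofReal_sub,
      Complex.norm_real]
  have h1 : ∀ y ∈ Metric.ball x (a / 2), HasDerivAt (fun t : ℝ => T t) (psiC y) y :=
    fun y hy => (hT y ((hmem y).1 hy)).comp_ofReal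
  have h2 : ∀ y, HasDerivAt (fun t : ℝ => (thetaFun t : ℂ)) (psiFun y : ℂ) y :=
    fun y => (thetaFun_hasDerivAt y).ofReal_comp
  refine ⟨T, hT, fun y hy => ?_⟩
  refine Metric.isOpen_ball.eqOn_of_deriv_eq (f := fun t : ℝ => T t)
    (g := fun t : ℝ => (thetaFun t : ℂ)) (s := Metric.ball x (a / 2))
    (convex_ball x _).isPreconnected
    (fun y hy => (h1 y hy).differentiableAt.differentiableWithinAt)
    (fun y hy => (h2 y).differentiableAt.differentiableWithinAt) ?_
    (Metric.mem_ball_self (by positivity) : x ∈ _) hT0 ((hmem y).2 hy)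
  intro y hy
  rw [(h1 y hy).deriv, (h2 y).deriv]
  exact psiC_ofReal y (mem_Ioo_of_ball x a y ha ha0 ((hmem y).1 hy))

theorem exp_aux2 : Real.exp (6 / 5) ≤ 4 := by
  have h : Real.exp (6 / 5) ^ 5 ≤ 4 ^ 5 := by
    rw [← Real.exp_nat_mul]
    have : ((5 : ℕ) : ℝ) * (6 / 5) = ((6 : ℕ) : ℝ) * 1 := by norm_num
    rw [this, Real.exp_nat_mul]
    calc Real.exp 1 ^ 6 ≤ (2.72 : ℝ) ^ 6 := by
          gcongr
          exact Real.exp_one_lt_d9.le.trans (by norm_num)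
      _ ≤ 4 ^ 5 := by norm_num
  exact le_of_pow_le_pow_left₀ (by norm_num) (by norm_num) h

theorem pow_exp_aux (u : ℝ) (_hu : 0 ≤ u) (k : ℕ) :
    u ^ k * Real.exp (-((1 / 2) * u ^ 2)) ≤ Real.sqrt (Nat.factorial k) := by
  apply Real.le_sqrt_of_sq_le
  rw [mul_pow, ← Real.exp_nat_mul, ← pow_mul, mul_comm k 2, pow_mul]
  have h := Real.pow_div_factorial_le_exp (u ^ 2) (sq_nonneg u) k
  have e : ((2 : ℕ) : ℝ) * -((1 / 2) * u ^ 2) = -(u ^ 2) := by push_cast; ring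
  rw [e, Real.exp_neg, ← div_eq_mul_inv, div_le_iff₀ (Real.exp_pos _)]
  rw [div_le_iff₀ (by positivity)] at h
  linarith

theorem inner_bound (x : ℝ) (hx : x ∈ Set.Ioo (-1 : ℝ) 1) (k : ℕ) :
    |iteratedDeriv k fFun x| ≤
      38.4 * 8 ^ k * (Nat.factorial k * Real.sqrt (Nat.factorial k)) := by
  obtain ⟨a, ha⟩ : ∃ a, a = 1 - x ^ 2 := ⟨_, rfl⟩
  have ha0 : 0 < a := by have := hx.1; have := hx.2; nlinarith
  have ha1 : a ≤ 1 := by nlinarith [sq_nonneg x]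
  obtain ⟨T, hT, hTr⟩ := exists_ext x a ha ha0
  set H : ℂ → ℂ := fun z => Complex.cos (T z) * psiC z with hH
  have hHd : DifferentiableOn ℂ H (Metric.ball (x : ℂ) (a / 2)) := by
    apply DifferentiableOn.mul _ (psiC_diff x a ha ha0)
    exact fun z hz => (hT z hz).differentiableAt.ccos.differentiableWithinAt
  have hHr : ∀ y : ℝ, (y : ℂ) ∈ Metric.ball (x : ℂ) (a / 2) → H y = fFun y := by
    intro y hy
    simp only [hH, fFun]
    rw [hTr y hy, psiC_ofReal y (mem_Ioo_of_ball x a y ha ha0 hy)]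
    push_cast; rfl
  have hxm : (x : ℂ) ∈ Metric.ball (x : ℂ) (a / 2) := Metric.mem_ball_self (by positivity)
  have hsub : Metric.closedBall (x : ℂ) (a / 8) ⊆ Metric.ball (x : ℂ) (a / 2) :=
    Metric.closedBall_subset_ball (by linarith)
  have key := iteratedDeriv_real_complex fFun fFun_contDiff H x (a / 2) hHd hHr k x hxm
  set E := Real.exp (-((1 / 2) * (a⁻¹) ^ 2)) with hE
  have hE1 : E ≤ 1 := by
    rw [hE, Real.exp_le_one_iff]; simp only [Left.neg_nonpos_iff]; positivity
  have hE0 : 0 < E := Real.exp_pos _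
  have hm := mConst_pos
  have hm2 := mConst_le
  have hbound : ∀ z ∈ Metric.sphere (x : ℂ) (a / 8), ‖H z‖ ≤ 38.4 * E := by
    intro z hz
    have hz' : z ∈ Metric.closedBall (x : ℂ) (a / 8) := Metric.sphere_subset_closedBall hz
    have hzn : ‖z - x‖ ≤ a / 8 := by simpa [dist_eq_norm] using hz'
    have hd : ‖T z - T x‖ ≤ mConst * ‖z - x‖ := by
      refine Convex.norm_image_sub_le_of_norm_hasDerivWithin_le (f := T) (f' := psiC)
        (s := Metric.closedBall (x : ℂ) (a / 8))
        (fun w hw => (hT w (hsub hw)).hasDerivWithinAt) (fun w hw => ?_)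
        (convex_closedBall _ _) (Metric.mem_closedBall_self (by positivity)) hz'
      refine (psiC_norm x w a ha ha0 (by simpa [dist_eq_norm] using hw)).trans ?_
      exact mul_le_of_le_one_right hm.le hE1
    have him : |(T z).im| ≤ 6 / 5 := by
      have e : (T z).im = (T z - T x).im := by
        rw [Complex.sub_im, hTr x hxm, Complex.ofReal_im, sub_zero]
      rw [e]
      refine (Complex.abs_im_le_norm _).trans (hd.trans ?_)
      nlinarith [norm_nonneg (z - x)]
    have hc : ‖Complex.cos (T z)‖ ≤ 4 :=
      (norm_cos_le _).trans ((Real.exp_le_exp.2 him).trans exp_aux2)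
    have hp := psiC_norm x z a ha ha0 hzn
    simp only [hH]
    rw [norm_mul]
    calc ‖Complex.cos (T z)‖ * ‖psiC z‖ ≤ 4 * (9.6 * E) := by
          gcongr
          exact hp.trans (by gcongr)
      _ = 38.4 * E := by ring
  have hcauchy := Complex.norm_iteratedDeriv_le_of_forall_mem_sphere_norm_le k
    (by positivity : 0 < a / 8) (DifferentiableOn.diffContOnCl
      (hHd.mono (Metric.closure_ball_subset_closedBall.trans hsub))) hbound
  rw [key, Complex.norm_real, Real.norm_eq_abs] at hcauchy
  refine hcauchy.trans ?_
  have h1 := pow_exp_aux a⁻¹ (by positivity) k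
  calc (Nat.factorial k : ℝ) * (38.4 * E) / (a / 8) ^ k
      = 38.4 * 8 ^ k * (Nat.factorial k * (a⁻¹ ^ k * E)) := by
        rw [div_pow, inv_pow]; field_simp
    _ ≤ _ := by gcongr

theorem const_ge : (16 : ℝ) ≤ (2 + 3 * Real.sqrt 2) * (1 + Real.pi / 2) := by
  have h1 : (1.414 : ℝ) ≤ Real.sqrt 2 := Real.le_sqrt_of_sq_le (by norm_num)
  have h2 := Real.pi_gt_d2
  nlinarith

theorem rpow_aux (t : ℝ) (ht : 0 ≤ t) : t ^ ((3 : ℝ) / 2) = t * Real.sqrt t := by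
  rcases ht.eq_or_lt with rfl | h
  · simp
  · rw [Real.sqrt_eq_rpow]
    nth_rw 2 [← Real.rpow_one t]
    rw [← Real.rpow_add h]; norm_num

theorem final_bound (k : ℕ) (x : ℝ) (hx : x ≠ 1) (hx' : x ≠ -1) :
    |iteratedDeriv (k + 1) sFun x| ≤
      16 ^ (k + 1) * (Nat.factorial (k + 1) : ℝ) ^ ((3 : ℝ) / 2) := by
  rw [iteratedDeriv_succ', deriv_sFun]
  rw [rpow_aux _ (by positivity)]
  by_cases hin : x ∈ Set.Ioo (-1 : ℝ) 1
  · rcases Nat.eq_zero_or_pos k with rfl | hk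
    · simp only [iteratedDeriv_zero, fFun, psiFun_eq]
      have h1 := Real.abs_cos_le_one (thetaFun x)
      rw [abs_mul, abs_of_nonneg (mul_nonneg mConst_pos.le (vFun_nonneg x))]
      have h2 := vFun_le_one x
      have h3 := vFun_nonneg x
      have h4 := mConst_le
      have h5 := mConst_pos
      have h6 : mConst * vFun x ≤ 9.6 := by nlinarith
      have h7 : 0 ≤ mConst * vFun x := by positivity
      norm_num
      nlinarith
    · refine (inner_bound x hin k).trans ?_
      have hk2 : (2 : ℝ) ≤ (k + 1 : ℕ) := by exact_mod_cast (by omega)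
      have hf : 2 * (Nat.factorial k : ℝ) ≤ (Nat.factorial (k + 1) : ℝ) := by
        rw [Nat.factorial_succ]; push_cast at hk2 ⊢; gcongr
      have hf0 : (0 : ℝ) < Nat.factorial k := by positivity
      have hs : Real.sqrt (Nat.factorial k) ≤ Real.sqrt (Nat.factorial (k + 1)) :=
        Real.sqrt_le_sqrt (by linarith)
      have hp : (2 : ℝ) * 8 ^ k ≤ 16 ^ k := by
        rw [show (16 : ℝ) = 2 * 8 by norm_num, mul_pow]
        gcongr
        exact le_self_pow₀ (by norm_num) (by omega)
      calc 38.4 * 8 ^ k * (Nat.factorial k * Real.sqrt (Nat.factorial k))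
          ≤ 64 * 8 ^ k * (Nat.factorial k * Real.sqrt (Nat.factorial k)) := by
            gcongr; norm_num
        _ = (16 * (2 * 8 ^ k)) * ((2 * Nat.factorial k) * Real.sqrt (Nat.factorial k)) := by ring
        _ ≤ (16 * 16 ^ k) * (Nat.factorial (k + 1) * Real.sqrt (Nat.factorial (k + 1))) := by
            gcongr
        _ = _ := by rw [pow_succ']
  · have h0 : fFun =ᶠ[nhds x] fun _ => 0 := by
      have hc : x ∈ (Set.Icc (-1 : ℝ) 1)ᶜ := by
        intro h
        exact hin ⟨lt_of_le_of_ne h.1 hx'.symm, lt_of_le_of_ne h.2 hx⟩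
      filter_upwards [isClosed_Icc.isOpen_compl.mem_nhds hc] with y hy
      simp only [fFun, psiFun_eq, vFun]
      rw [if_neg (fun h => hy (Set.Ioo_subset_Icc_self h))]
      simp
    rw [h0.iteratedDeriv_eq]
    have : iteratedDeriv k (fun _ : ℝ => (0 : ℝ)) x = 0 := by
      simp
    rw [this, abs_zero]
    positivity

theorem final_bound' (k : ℕ) (x : ℝ) :
    |iteratedDeriv (k + 1) sFun x| ≤
      16 ^ (k + 1) * (Nat.factorial (k + 1) : ℝ) ^ ((3 : ℝ) / 2) := by
  have hcont : Continuous (fun x => |iteratedDeriv (k + 1) sFun x|) :=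
    (sFun_contDiff.continuous_iteratedDeriv (k + 1)
      (by exact_mod_cast (le_top : ((k + 1 : ℕ) : ℕ∞) ≤ ⊤))).abs
  have hcl : IsClosed {x | |iteratedDeriv (k + 1) sFun x| ≤
      16 ^ (k + 1) * (Nat.factorial (k + 1) : ℝ) ^ ((3 : ℝ) / 2)} :=
    isClosed_le hcont continuous_const
  have hd : Dense (({1, -1} : Set ℝ)ᶜ) := Set.Countable.dense_compl ℝ (Set.toFinite _).countable
  have hsub : (({1, -1} : Set ℝ)ᶜ) ⊆ {x | |iteratedDeriv (k + 1) sFun x| ≤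
      16 ^ (k + 1) * (Nat.factorial (k + 1) : ℝ) ^ ((3 : ℝ) / 2)} := by
    intro y hy
    simp only [Set.mem_compl_iff, Set.mem_insert_iff, Set.mem_singleton_iff, not_or] at hy
    exact final_bound k y hy.1 hy.2
  exact hcl.closure_subset_iff.2 hsub (hd x)

/-- **The modified Heaviside function `s` is Gevrey of class
`G^{3/2}_0(1, (2+3√2)(1+π/2))`:** `s` is `C^∞` and
`‖s^(k)‖_∞ ≤ ((2+3√2)(1+π/2))^k (k!)^{3/2}` for all `k ≥ 0`. -/
theorem stmt19 :
    ContDiff ℝ (⊤ : ℕ∞) sFun ∧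
    ∀ k : ℕ, ∀ x : ℝ,
      |iteratedDeriv k sFun x|
        ≤ ((2 + 3 * Real.sqrt 2) * (1 + Real.pi / 2)) ^ k *
            (Nat.factorial k : ℝ) ^ ((3 : ℝ) / 2) := by
  refine ⟨sFun_contDiff, fun k x => ?_⟩
  cases k with
  | zero =>
    simp only [iteratedDeriv_zero, sFun]
    simpa using Real.abs_sin_le_one (thetaFun x)
  | succ k =>
    refine (final_bound' k x).trans ?_
    have := const_ge
    gcongr
end
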